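/- arXiv:1810.08467 — 7 statements merged into one kernel-verified Lean document; each statement's English description precedes it below -/
import Mathlib

section
/- Hopf lemma for graphical mean curvature flow: let δ > 0 and let u and v be graphical solutions of the mean curvature flow in P(0,δ) ∩ {x₁ ≤ 0}, i.e. smooth functions on {(x,t) : |x| < δ, x₁ ≤ 0, −δ² < t ≤ 0} satisfying the graphical mean curvature flow equation there. Suppose that u(0,0) = v(0,0) and that u(x,t) < v(x,t) at every point of P(0,δ) with x₁ < 0. Then ∂u/∂x₁(0,0) > ∂v/∂x₁(0,0). -/
noncomputable section

/-- Partial derivative in the first spatial variable. -/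
def pd1 (f : ℝ → ℝ → ℝ → ℝ) (x₁ x₂ t : ℝ) : ℝ := deriv (fun s => f s x₂ t) x₁

/-- Partial derivative in the second spatial variable. -/
def pd2 (f : ℝ → ℝ → ℝ → ℝ) (x₁ x₂ t : ℝ) : ℝ := deriv (fun s => f x₁ s t) x₂

/-- Partial derivative in time. -/
def pdt (f : ℝ → ℝ → ℝ → ℝ) (x₁ x₂ t : ℝ) : ℝ := deriv (fun s => f x₁ x₂ s) t

/-- Second partial derivative `∂₁∂₁`. -/
def pd11 (f : ℝ → ℝ → ℝ → ℝ) (x₁ x₂ t : ℝ) : ℝ := deriv (fun s => pd1 f s x₂ t) x₁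

/-- Second partial derivative `∂₂∂₁`. -/
def pd12 (f : ℝ → ℝ → ℝ → ℝ) (x₁ x₂ t : ℝ) : ℝ := deriv (fun s => pd1 f x₁ s t) x₂

/-- Second partial derivative `∂₁∂₂`. -/
def pd21 (f : ℝ → ℝ → ℝ → ℝ) (x₁ x₂ t : ℝ) : ℝ := deriv (fun s => pd2 f s x₂ t) x₁

/-- Second partial derivative `∂₂∂₂`. -/
def pd22 (f : ℝ → ℝ → ℝ → ℝ) (x₁ x₂ t : ℝ) : ℝ := deriv (fun s => pd2 f x₁ s t) x₂

/-- `1 + |Du|²`. -/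
def gradQ (f : ℝ → ℝ → ℝ → ℝ) (x₁ x₂ t : ℝ) : ℝ :=
  1 + (pd1 f x₁ x₂ t) ^ 2 + (pd2 f x₁ x₂ t) ^ 2

/-- The parabolic ball `P(0,δ) = {(x,t) : |x| < δ, -δ² < t ≤ 0}` in `ℝ² × ℝ`,
with points recorded as triples `(x₁, x₂, t)`. -/
def pball (δ : ℝ) : Set (ℝ × ℝ × ℝ) :=
  {p | p.1 ^ 2 + p.2.1 ^ 2 < δ ^ 2 ∧ -δ ^ 2 < p.2.2 ∧ p.2.2 ≤ 0}

/-- `f` is a (smooth) graphical solution of the mean curvature flow on the space-time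
set `S`: it is smooth, and on `S` it satisfies the nondivergence-form graphical mean
curvature flow equation
`∂ₜ f = Σᵢⱼ (δᵢⱼ - ∂ᵢf ∂ⱼf / (1+|Df|²)) ∂ᵢ∂ⱼ f`. -/
def IsGraphicalMCF (S : Set (ℝ × ℝ × ℝ)) (f : ℝ → ℝ → ℝ → ℝ) : Prop :=
  ContDiff ℝ (⊤ : ℕ∞) (fun p : ℝ × ℝ × ℝ => f p.1 p.2.1 p.2.2) ∧
  ∀ p ∈ S,
    pdt f p.1 p.2.1 p.2.2 =
      (1 - (pd1 f p.1 p.2.1 p.2.2) ^ 2 / gradQ f p.1 p.2.1 p.2.2) * pd11 f p.1 p.2.1 p.2.2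
      + (0 - pd1 f p.1 p.2.1 p.2.2 * pd2 f p.1 p.2.1 p.2.2 / gradQ f p.1 p.2.1 p.2.2)
          * pd12 f p.1 p.2.1 p.2.2
      + (0 - pd2 f p.1 p.2.1 p.2.2 * pd1 f p.1 p.2.1 p.2.2 / gradQ f p.1 p.2.1 p.2.2)
          * pd21 f p.1 p.2.1 p.2.2
      + (1 - (pd2 f p.1 p.2.1 p.2.2) ^ 2 / gradQ f p.1 p.2.1 p.2.2) * pd22 f p.1 p.2.1 p.2.2

/-- The pointwise difference of two graph functions. -/
def fsub (u v : ℝ → ℝ → ℝ → ℝ) : ℝ → ℝ → ℝ → ℝ := fun a b c => u a b c - v a b c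

/-- A smooth function of three real variables, in curried form. -/
def SmoothThree (f : ℝ → ℝ → ℝ → ℝ) : Prop :=
  ContDiff ℝ (⊤ : ℕ∞) (fun p : ℝ × ℝ × ℝ => f p.1 p.2.1 p.2.2)

namespace SmoothThree

variable {f : ℝ → ℝ → ℝ → ℝ}

/-- The derivative of a smooth function along a curve. -/
lemma hasDerivAt_comp (hf : SmoothThree f) {x y z : ℝ → ℝ} {x' y' z' s : ℝ}
    (hx : HasDerivAt x x' s) (hy : HasDerivAt y y' s) (hz : HasDerivAt z z' s) :
    HasDerivAt (fun r => f (x r) (y r) (z r))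
      (fderiv ℝ (fun p : ℝ × ℝ × ℝ => f p.1 p.2.1 p.2.2) (x s, y s, z s) (x', y', z')) s := by
  have hd : DifferentiableAt ℝ (fun p : ℝ × ℝ × ℝ => f p.1 p.2.1 p.2.2) (x s, y s, z s) :=
    (ContDiff.differentiable hf (by simp)).differentiableAt
  exact hd.hasFDerivAt.comp_hasDerivAt s (hx.prodMk (hy.prodMk hz))

lemma pd1_eq_fderiv (hf : SmoothThree f) (a b c : ℝ) :
    pd1 f a b c = fderiv ℝ (fun p : ℝ × ℝ × ℝ => f p.1 p.2.1 p.2.2) (a, b, c) (1, 0, 0) :=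
  (hf.hasDerivAt_comp (hasDerivAt_id a) (hasDerivAt_const a b) (hasDerivAt_const a c)).deriv

lemma pd2_eq_fderiv (hf : SmoothThree f) (a b c : ℝ) :
    pd2 f a b c = fderiv ℝ (fun p : ℝ × ℝ × ℝ => f p.1 p.2.1 p.2.2) (a, b, c) (0, 1, 0) :=
  (hf.hasDerivAt_comp (hasDerivAt_const b a) (hasDerivAt_id b) (hasDerivAt_const b c)).deriv

lemma pdt_eq_fderiv (hf : SmoothThree f) (a b c : ℝ) :
    pdt f a b c = fderiv ℝ (fun p : ℝ × ℝ × ℝ => f p.1 p.2.1 p.2.2) (a, b, c) (0, 0, 1) :=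
  (hf.hasDerivAt_comp (hasDerivAt_const c a) (hasDerivAt_const c b) (hasDerivAt_id c)).deriv

lemma hasDerivAt_pd1 (hf : SmoothThree f) (a b c : ℝ) :
    HasDerivAt (fun s => f s b c) (pd1 f a b c) a :=
  hf.pd1_eq_fderiv a b c ▸
    hf.hasDerivAt_comp (hasDerivAt_id a) (hasDerivAt_const a b) (hasDerivAt_const a c)

lemma hasDerivAt_pd2 (hf : SmoothThree f) (a b c : ℝ) :
    HasDerivAt (fun s => f a s c) (pd2 f a b c) b :=
  hf.pd2_eq_fderiv a b c ▸
    hf.hasDerivAt_comp (hasDerivAt_const b a) (hasDerivAt_id b) (hasDerivAt_const b c)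

lemma hasDerivAt_pdt (hf : SmoothThree f) (a b c : ℝ) :
    HasDerivAt (fun s => f a b s) (pdt f a b c) c :=
  hf.pdt_eq_fderiv a b c ▸
    hf.hasDerivAt_comp (hasDerivAt_const c a) (hasDerivAt_const c b) (hasDerivAt_id c)

lemma contDiff_fderiv_apply (hf : SmoothThree f) (e : ℝ × ℝ × ℝ) :
    ContDiff ℝ (⊤ : ℕ∞)
      (fun p => fderiv ℝ (fun p : ℝ × ℝ × ℝ => f p.1 p.2.1 p.2.2) p e) :=
  (ContDiff.fderiv_right (m := (⊤ : ℕ∞)) hf (by simp)).clm_apply contDiff_const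

lemma pd1 (hf : SmoothThree f) : SmoothThree (pd1 f) := by
  have h := hf.contDiff_fderiv_apply (1, 0, 0)
  simpa only [SmoothThree, hf.pd1_eq_fderiv] using h

lemma pd2 (hf : SmoothThree f) : SmoothThree (pd2 f) := by
  have h := hf.contDiff_fderiv_apply (0, 1, 0)
  simpa only [SmoothThree, hf.pd2_eq_fderiv] using h

lemma pdt (hf : SmoothThree f) : SmoothThree (pdt f) := by
  have h := hf.contDiff_fderiv_apply (0, 0, 1)
  simpa only [SmoothThree, hf.pdt_eq_fderiv] using h

lemma continuous (hf : SmoothThree f) :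
    Continuous (fun p : ℝ × ℝ × ℝ => f p.1 p.2.1 p.2.2) :=
  ContDiff.continuous hf

/-- The derivative along a spatial line. -/
lemma hasDerivAt_line (hf : SmoothThree f) (a b c e₁ e₂ s : ℝ) :
    HasDerivAt (fun r => f (a + r * e₁) (b + r * e₂) c)
      (e₁ * _root_.pd1 f (a + s * e₁) (b + s * e₂) c
        + e₂ * _root_.pd2 f (a + s * e₁) (b + s * e₂) c) s := by
  have hx : HasDerivAt (fun r : ℝ => a + r * e₁) e₁ s := by
    simpa using ((hasDerivAt_id s).mul_const e₁).const_add a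
  have hy : HasDerivAt (fun r : ℝ => b + r * e₂) e₂ s := by
    simpa using ((hasDerivAt_id s).mul_const e₂).const_add b
  convert hf.hasDerivAt_comp hx hy (hasDerivAt_const s c) using 1
  have he : ((e₁, e₂, 0) : ℝ × ℝ × ℝ) = e₁ • (1, 0, 0) + e₂ • (0, 1, 0) := by simp
  rw [he, map_add, map_smul, map_smul, hf.pd1_eq_fderiv, hf.pd2_eq_fderiv, smul_eq_mul,
    smul_eq_mul]

end SmoothThree

/-- The second-order necessary condition for a local minimum of a real function. -/
lemma IsLocalMin.deriv_deriv_nonneg {g : ℝ → ℝ} {a : ℝ} (h : IsLocalMin g a)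
    (hc : ContinuousAt g a) : 0 ≤ deriv (deriv g) a := by
  by_contra! hneg
  have hmax := isLocalMax_of_deriv_deriv_neg hneg h.deriv_eq_zero hc
  have hconst : g =ᶠ[nhds a] fun _ => g a := by
    filter_upwards [h, hmax] with x h₁ h₂ using le_antisymm h₂ h₁
  have hzero : deriv (deriv g) a = 0 := by
    rw [hconst.deriv.deriv_eq]; simp
  exact hneg.ne hzero

/-- At a spatial local minimum, the second derivative in every spatial direction is nonnegative. -/
lemma SmoothThree.hessian_nonneg {f : ℝ → ℝ → ℝ → ℝ} (hf : SmoothThree f) {a b c : ℝ}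
    (hmin : IsLocalMin (fun q : ℝ × ℝ => f q.1 q.2 c) (a, b)) (e₁ e₂ : ℝ) :
    0 ≤ e₁ * (e₁ * pd11 f a b c + e₂ * pd12 f a b c)
      + e₂ * (e₁ * pd21 f a b c + e₂ * pd22 f a b c) := by
  have hcont : ContinuousAt (fun r : ℝ => (a + r * e₁, b + r * e₂)) 0 := by fun_prop
  have hline : IsLocalMin (fun r => f (a + r * e₁) (b + r * e₂) c) 0 := by
    have h := hcont.eventually (p := fun q : ℝ × ℝ => f a b c ≤ f q.1 q.2 c)
      (by simpa [IsLocalMin, IsMinFilter] using hmin)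
    filter_upwards [h] with r hr
    simpa using hr
  have hnonneg := hline.deriv_deriv_nonneg (hf.hasDerivAt_line a b c e₁ e₂ 0).continuousAt
  have hderiv : deriv (fun r => f (a + r * e₁) (b + r * e₂) c) =
      fun r => e₁ * _root_.pd1 f (a + r * e₁) (b + r * e₂) c
        + e₂ * _root_.pd2 f (a + r * e₁) (b + r * e₂) c :=
    funext fun r => (hf.hasDerivAt_line a b c e₁ e₂ r).deriv
  have hsecond := (((hf.pd1.hasDerivAt_line a b c e₁ e₂ 0).const_mul e₁).add
    ((hf.pd2.hasDerivAt_line a b c e₁ e₂ 0).const_mul e₂)).deriv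
  rw [hderiv] at hnonneg
  have hnonneg := hnonneg.trans_eq hsecond
  simp only [zero_mul, add_zero] at hnonneg
  exact hnonneg

/-- The derivative at a minimum over the past is nonpositive. -/
lemma HasDerivAt.nonpos_of_past_min {g : ℝ → ℝ} {g' c d : ℝ} (hg : HasDerivAt g g' c)
    (hd : d < c) (hmin : ∀ s ∈ Set.Icc d c, g c ≤ g s) : g' ≤ 0 := by
  have h := hg.hasDerivWithinAt (s := Set.Iio c)
  rw [hasDerivWithinAt_iff_tendsto_slope' (by simp)] at h
  refine le_of_tendsto h ?_
  filter_upwards [Ioo_mem_nhdsLT hd] with s hs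
  rw [slope_def_field]
  exact div_nonpos_of_nonneg_of_nonpos (sub_nonneg.2 (hmin s ⟨hs.1.le, hs.2.le⟩))
    (sub_nonpos.2 hs.2.le)

/-- The barrier of the Hopf lemma. -/
def hopfBarrier (K x₁ x₂ t : ℝ) : ℝ := -x₁ + K * x₁ ^ 2 - x₂ ^ 2 + t

/-- The difference `v - u`, corrected by a multiple of the barrier. -/
def hopfGap (K ε : ℝ) (u v : ℝ → ℝ → ℝ → ℝ) (x₁ x₂ t : ℝ) : ℝ :=
  v x₁ x₂ t - u x₁ x₂ t - ε * hopfBarrier K x₁ x₂ t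

section Gap

variable {u v : ℝ → ℝ → ℝ → ℝ} (K ε : ℝ)

lemma smoothThree_hopfGap (hu : SmoothThree u) (hv : SmoothThree v) :
    SmoothThree (hopfGap K ε u v) := by
  have hb : ContDiff ℝ (⊤ : ℕ∞) (fun p : ℝ × ℝ × ℝ => ε * hopfBarrier K p.1 p.2.1 p.2.2) := by
    unfold hopfBarrier
    fun_prop
  exact (ContDiff.sub hv hu).sub hb

lemma pd1_hopfGap (hu : SmoothThree u) (hv : SmoothThree v) :
    pd1 (hopfGap K ε u v) =
      fun a b c => pd1 v a b c - pd1 u a b c - ε * (-1 + 2 * K * a) := by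
  funext a b c
  have hb : HasDerivAt (fun s => hopfBarrier K s b c) (-1 + 2 * K * a) a := by
    refine ((((hasDerivAt_id a).neg.add (((hasDerivAt_id a).pow 2).const_mul K)).sub_const
      (b ^ 2)).add_const c).congr_deriv ?_
    simp
    ring
  exact (((hv.hasDerivAt_pd1 a b c).sub (hu.hasDerivAt_pd1 a b c)).sub (hb.const_mul ε)).deriv

lemma pd2_hopfGap (hu : SmoothThree u) (hv : SmoothThree v) :
    pd2 (hopfGap K ε u v) =
      fun a b c => pd2 v a b c - pd2 u a b c - ε * (-2 * b) := by
  funext a b c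
  have hb : HasDerivAt (fun s => hopfBarrier K a s c) (-2 * b) b := by
    refine ((((hasDerivAt_id b).pow 2).const_sub (-a + K * a ^ 2)).add_const c).congr_deriv ?_
    simp
  exact (((hv.hasDerivAt_pd2 a b c).sub (hu.hasDerivAt_pd2 a b c)).sub (hb.const_mul ε)).deriv

lemma pdt_hopfGap (hu : SmoothThree u) (hv : SmoothThree v) (a b c : ℝ) :
    pdt (hopfGap K ε u v) a b c = pdt v a b c - pdt u a b c - ε := by
  have hb : HasDerivAt (fun s => hopfBarrier K a b s) 1 c :=
    (hasDerivAt_id c).const_add (-a + K * a ^ 2 - b ^ 2)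
  refine (((hv.hasDerivAt_pdt a b c).sub (hu.hasDerivAt_pdt a b c)).sub
    (hb.const_mul ε)).deriv.trans ?_
  rw [mul_one]

lemma pd11_hopfGap (hu : SmoothThree u) (hv : SmoothThree v) (a b c : ℝ) :
    pd11 (hopfGap K ε u v) a b c = pd11 v a b c - pd11 u a b c - ε * (2 * K) := by
  have hb : HasDerivAt (fun s : ℝ => -1 + 2 * K * s) (2 * K) a := by
    simpa using ((hasDerivAt_id a).const_mul (2 * K)).const_add (-1)
  rw [pd11, pd1_hopfGap K ε hu hv]
  exact (((hv.pd1.hasDerivAt_pd1 a b c).sub (hu.pd1.hasDerivAt_pd1 a b c)).sub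
    (hb.const_mul ε)).deriv

lemma pd12_hopfGap (hu : SmoothThree u) (hv : SmoothThree v) (a b c : ℝ) :
    pd12 (hopfGap K ε u v) a b c = pd12 v a b c - pd12 u a b c := by
  rw [pd12, pd1_hopfGap K ε hu hv]
  exact (((hv.pd1.hasDerivAt_pd2 a b c).sub (hu.pd1.hasDerivAt_pd2 a b c)).sub_const _).deriv

lemma pd21_hopfGap (hu : SmoothThree u) (hv : SmoothThree v) (a b c : ℝ) :
    pd21 (hopfGap K ε u v) a b c = pd21 v a b c - pd21 u a b c := by
  rw [pd21, pd2_hopfGap K ε hu hv]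
  exact (((hv.pd2.hasDerivAt_pd1 a b c).sub (hu.pd2.hasDerivAt_pd1 a b c)).sub_const _).deriv

lemma pd22_hopfGap (hu : SmoothThree u) (hv : SmoothThree v) (a b c : ℝ) :
    pd22 (hopfGap K ε u v) a b c = pd22 v a b c - pd22 u a b c - ε * (-2) := by
  have hb : HasDerivAt (fun s : ℝ => -2 * s) (-2) b := by
    simpa using (hasDerivAt_id b).const_mul (-2)
  rw [pd22, pd2_hopfGap K ε hu hv]
  exact (((hv.pd2.hasDerivAt_pd2 a b c).sub (hu.pd2.hasDerivAt_pd2 a b c)).sub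
    (hb.const_mul ε)).deriv

end Gap

/-- The graphical mean curvature flow equation with the denominator cleared. -/
lemma IsGraphicalMCF.gradQ_mul_pdt {S : Set (ℝ × ℝ × ℝ)} {f : ℝ → ℝ → ℝ → ℝ}
    (hf : IsGraphicalMCF S f) {a b c : ℝ} (h : (a, b, c) ∈ S) :
    (1 + pd1 f a b c ^ 2 + pd2 f a b c ^ 2) * pdt f a b c =
      (1 + pd2 f a b c ^ 2) * pd11 f a b c
        - pd1 f a b c * pd2 f a b c * (pd12 f a b c + pd21 f a b c)
        + (1 + pd1 f a b c ^ 2) * pd22 f a b c := by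
  have hQ : (1 + pd1 f a b c ^ 2 + pd2 f a b c ^ 2) ≠ 0 := by positivity
  have h := hf.2 _ h
  simp only [gradQ] at h
  rw [h]
  field_simp
  ring

/-- The first-order perturbation estimate behind the strict subsolution property of the barrier:
`p = q + ε η` are the gradients of `v` and `u`, and the remaining data are the second and time
derivatives of `u`. -/
lemma mcf_perturbation_bound {M ε p₁ p₂ q₁ q₂ η₁ η₂ r₁₁ r₁₂ r₂₁ r₂₂ τ : ℝ} (hM : 0 ≤ M) (hε : 0 ≤ ε)
    (hp₁ : |p₁| ≤ M) (hp₂ : |p₂| ≤ M) (hq₁ : |q₁| ≤ M) (hq₂ : |q₂| ≤ M)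
    (hη₁ : |η₁| ≤ 3) (hη₂ : |η₂| ≤ 3)
    (hr₁₁ : |r₁₁| ≤ M) (hr₁₂ : |r₁₂| ≤ M) (hr₂₁ : |r₂₁| ≤ M) (hr₂₂ : |r₂₂| ≤ M) (hτ : |τ| ≤ M)
    (h₁ : p₁ - q₁ = ε * η₁) (h₂ : p₂ - q₂ = ε * η₂) :
    -(36 * M ^ 2 * ε) ≤
      ((1 + p₂ ^ 2) * r₁₁ - p₁ * p₂ * (r₁₂ + r₂₁) + (1 + p₁ ^ 2) * r₂₂
          - (1 + p₁ ^ 2 + p₂ ^ 2) * τ)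
        - ((1 + q₂ ^ 2) * r₁₁ - q₁ * q₂ * (r₁₂ + r₂₁) + (1 + q₁ ^ 2) * r₂₂
          - (1 + q₁ ^ 2 + q₂ ^ 2) * τ) := by
  have hprod : ∀ {η x y : ℝ}, |η| ≤ 3 → |x| ≤ M → |y| ≤ M → |η * x * y| ≤ 3 * M * M := by
    intro η x y hη hx hy
    rw [abs_mul, abs_mul]
    gcongr
  have key : ((1 + p₂ ^ 2) * r₁₁ - p₁ * p₂ * (r₁₂ + r₂₁) + (1 + p₁ ^ 2) * r₂₂
          - (1 + p₁ ^ 2 + p₂ ^ 2) * τ)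
        - ((1 + q₂ ^ 2) * r₁₁ - q₁ * q₂ * (r₁₂ + r₂₁) + (1 + q₁ ^ 2) * r₂₂
          - (1 + q₁ ^ 2 + q₂ ^ 2) * τ) =
      ε * (η₂ * p₂ * r₁₁ + η₂ * q₂ * r₁₁ - η₂ * p₁ * r₁₂ - η₂ * p₁ * r₂₁ - η₁ * q₂ * r₁₂
        - η₁ * q₂ * r₂₁ + η₁ * p₁ * r₂₂ + η₁ * q₁ * r₂₂ - η₁ * p₁ * τ - η₁ * q₁ * τ
        - η₂ * p₂ * τ - η₂ * q₂ * τ) := by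
    linear_combination ((p₁ + q₁) * (r₂₂ - τ) - q₂ * (r₁₂ + r₂₁)) * h₁
      + ((p₂ + q₂) * (r₁₁ - τ) - p₁ * (r₁₂ + r₂₁)) * h₂
  rw [key]
  have b₁ := abs_le.1 (hprod hη₂ hp₂ hr₁₁)
  have b₂ := abs_le.1 (hprod hη₂ hq₂ hr₁₁)
  have b₃ := abs_le.1 (hprod hη₂ hp₁ hr₁₂)
  have b₄ := abs_le.1 (hprod hη₂ hp₁ hr₂₁)
  have b₅ := abs_le.1 (hprod hη₁ hq₂ hr₁₂)
  have b₆ := abs_le.1 (hprod hη₁ hq₂ hr₂₁)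
  have b₇ := abs_le.1 (hprod hη₁ hp₁ hr₂₂)
  have b₈ := abs_le.1 (hprod hη₁ hq₁ hr₂₂)
  have b₉ := abs_le.1 (hprod hη₁ hp₁ hτ)
  have b₁₀ := abs_le.1 (hprod hη₁ hq₁ hτ)
  have b₁₁ := abs_le.1 (hprod hη₂ hp₂ hτ)
  have b₁₂ := abs_le.1 (hprod hη₂ hq₂ hτ)
  have hsum : -(36 * M ^ 2) ≤ η₂ * p₂ * r₁₁ + η₂ * q₂ * r₁₁ - η₂ * p₁ * r₁₂ - η₂ * p₁ * r₂₁
        - η₁ * q₂ * r₁₂ - η₁ * q₂ * r₂₁ + η₁ * p₁ * r₂₂ + η₁ * q₁ * r₂₂ - η₁ * p₁ * τ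
        - η₁ * q₁ * τ - η₂ * p₂ * τ - η₂ * q₂ * τ := by
    linarith [b₁.1, b₂.1, b₃.2, b₄.2, b₅.2, b₆.2, b₇.1, b₈.1, b₉.2, b₁₀.2, b₁₁.2, b₁₂.2]
  linarith [mul_le_mul_of_nonneg_left hsum hε]

/-- The gap between two solutions, corrected by a small multiple of the barrier, has no interior
parabolic minimum. -/
lemma not_parabolic_min_hopfGap {S : Set (ℝ × ℝ × ℝ)} {u v : ℝ → ℝ → ℝ → ℝ}
    (hu : IsGraphicalMCF S u) (hv : IsGraphicalMCF S v) {a b c d M K ε : ℝ}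
    (hS : (a, b, c) ∈ S) (hε : 0 < ε) (hM : 0 ≤ M) (hK : 2 + 20 * M ^ 2 ≤ K)
    (ha : |K * a| ≤ 1) (hb : |b| ≤ 1)
    (hv₁ : |pd1 v a b c| ≤ M) (hv₂ : |pd2 v a b c| ≤ M)
    (hu₁ : |pd1 u a b c| ≤ M) (hu₂ : |pd2 u a b c| ≤ M)
    (hu₁₁ : |pd11 u a b c| ≤ M) (hu₁₂ : |pd12 u a b c| ≤ M)
    (hu₂₁ : |pd21 u a b c| ≤ M) (hu₂₂ : |pd22 u a b c| ≤ M) (hut : |pdt u a b c| ≤ M)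
    (hmin : IsLocalMin (fun q : ℝ × ℝ => hopfGap K ε u v q.1 q.2 c) (a, b)) (hd : d < c)
    (hpast : ∀ s ∈ Set.Icc d c, hopfGap K ε u v a b c ≤ hopfGap K ε u v a b s) : False := by
  have su : SmoothThree u := hu.1
  have sv : SmoothThree v := hv.1
  have sg := smoothThree_hopfGap K ε su sv
  have ht := (sg.hasDerivAt_pdt a b c).nonpos_of_past_min hd hpast
  rw [pdt_hopfGap K ε su sv] at ht
  have hc₁ : ContinuousAt (fun s : ℝ => (s, b)) a := by fun_prop
  have hc₂ : ContinuousAt (fun s : ℝ => (a, s)) b := by fun_prop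
  have h₁ : pd1 (hopfGap K ε u v) a b c = 0 := by
    refine IsLocalMin.deriv_eq_zero (f := fun s => hopfGap K ε u v s b c) ?_
    exact hc₁.eventually (p := fun q : ℝ × ℝ => hopfGap K ε u v a b c ≤ hopfGap K ε u v q.1 q.2 c)
      hmin
  have h₂ : pd2 (hopfGap K ε u v) a b c = 0 := by
    refine IsLocalMin.deriv_eq_zero (f := fun s => hopfGap K ε u v a s c) ?_
    exact hc₂.eventually (p := fun q : ℝ × ℝ => hopfGap K ε u v a b c ≤ hopfGap K ε u v q.1 q.2 c)
      hmin
  simp only [pd1_hopfGap K ε su sv] at h₁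
  simp only [pd2_hopfGap K ε su sv] at h₂
  have hxx := sg.hessian_nonneg hmin 1 0
  have hyy := sg.hessian_nonneg hmin 0 1
  have hee := sg.hessian_nonneg hmin (pd2 v a b c) (-pd1 v a b c)
  simp only [pd11_hopfGap K ε su sv, pd12_hopfGap K ε su sv, pd21_hopfGap K ε su sv,
    pd22_hopfGap K ε su sv] at hxx hyy hee
  have hη₁ : |-1 + 2 * K * a| ≤ 3 := by
    rw [abs_le] at ha ⊢
    constructor <;> linarith
  have hη₂ : |-2 * b| ≤ 3 := by
    rw [abs_le] at hb ⊢
    constructor <;> linarith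
  have hpert := mcf_perturbation_bound hM hε.le hv₁ hv₂ hu₁ hu₂ hη₁ hη₂ hu₁₁ hu₁₂ hu₂₁ hu₂₂ hut
    (by linarith) (by linarith)
  have eu := hu.gradQ_mul_pdt hS
  have ev := hv.gradQ_mul_pdt hS
  have hv₁' : pd1 v a b c ^ 2 ≤ M ^ 2 := sq_le_sq' (abs_le.1 hv₁).1 (abs_le.1 hv₁).2
  have hv₂' : pd2 v a b c ^ 2 ≤ M ^ 2 := sq_le_sq' (abs_le.1 hv₂).1 (abs_le.1 hv₂).2
  generalize pd1 v a b c = p₁ at *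
  generalize pd2 v a b c = p₂ at *
  have htime : (1 + p₁ ^ 2 + p₂ ^ 2) * (pdt v a b c - pdt u a b c) ≤ (1 + p₁ ^ 2 + p₂ ^ 2) * ε :=
    mul_le_mul_of_nonneg_left (by linarith) (by positivity)
  have hmain : ε * (2 * K * (1 + p₂ ^ 2) - 2 * (1 + p₁ ^ 2)) - 36 * M ^ 2 * ε
      ≤ (1 + p₁ ^ 2 + p₂ ^ 2) * ε := by
    linarith
  have hdiv : 2 * K * (1 + p₂ ^ 2) - 2 * (1 + p₁ ^ 2) - 36 * M ^ 2 ≤ 1 + p₁ ^ 2 + p₂ ^ 2 := by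
    refine le_of_mul_le_mul_left ?_ hε
    linarith
  have hKp : 0 ≤ K * p₂ ^ 2 := mul_nonneg (by nlinarith [sq_nonneg M]) (sq_nonneg _)
  nlinarith [sq_nonneg M]

/-- A common bound for all derivatives of two smooth functions that enter the comparison. -/
lemma exists_derivative_bound {u v : ℝ → ℝ → ℝ → ℝ} (hu : SmoothThree u) (hv : SmoothThree v)
    {S : Set (ℝ × ℝ × ℝ)} (hS : IsCompact S) :
    ∃ M, 0 ≤ M ∧ ∀ a b c, (a, b, c) ∈ S →
      |pd1 v a b c| ≤ M ∧ |pd2 v a b c| ≤ M ∧ |pd1 u a b c| ≤ M ∧ |pd2 u a b c| ≤ M ∧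
      |pd11 u a b c| ≤ M ∧ |pd12 u a b c| ≤ M ∧ |pd21 u a b c| ≤ M ∧ |pd22 u a b c| ≤ M ∧
      |pdt u a b c| ≤ M := by
  obtain ⟨M, hM⟩ := hS.exists_bound_of_continuousOn
    (hv.pd1.continuous.prodMk <| hv.pd2.continuous.prodMk <| hu.pd1.continuous.prodMk <|
      hu.pd2.continuous.prodMk <| hu.pd1.pd1.continuous.prodMk <|
      hu.pd1.pd2.continuous.prodMk <| hu.pd2.pd1.continuous.prodMk <|
      hu.pd2.pd2.continuous.prodMk hu.pdt.continuous).continuousOn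
  refine ⟨max M 0, le_max_right _ _, fun a b c h => ?_⟩
  have hle := (hM _ h).trans (le_max_left M 0)
  simp only [norm_prod_le_iff, Real.norm_eq_abs] at hle
  exact hle

/-- Hopf lemma for graphical mean curvature flow: if `u` and `v` are graphical
solutions of the mean curvature flow in `P(0,δ) ∩ {x₁ ≤ 0}` with `u(0,0) = v(0,0)`
and `u < v` at every point of `P(0,δ)` with `x₁ < 0`, then
`∂u/∂x₁(0,0) > ∂v/∂x₁(0,0)`. -/
theorem hopf_lemma_graphical_MCF
    (δ : ℝ) (hδ : 0 < δ)
    (u v : ℝ → ℝ → ℝ → ℝ)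
    (hu : IsGraphicalMCF (pball δ ∩ {p : ℝ × ℝ × ℝ | p.1 ≤ 0}) u)
    (hv : IsGraphicalMCF (pball δ ∩ {p : ℝ × ℝ × ℝ | p.1 ≤ 0}) v)
    (heq : u 0 0 0 = v 0 0 0)
    (hlt : ∀ p ∈ pball δ, p.1 < 0 → u p.1 p.2.1 p.2.2 < v p.1 p.2.1 p.2.2) :
    pd1 v 0 0 0 < pd1 u 0 0 0 := by
  have su : SmoothThree u := hu.1
  have sv : SmoothThree v := hv.1
  obtain ⟨s, hs, hs1, hsδ⟩ : ∃ s : ℝ, 0 < s ∧ s ≤ 1 ∧ s ≤ δ / 2 :=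
    ⟨min 1 (δ / 2), by positivity, min_le_left _ _, min_le_right _ _⟩
  have hsq : s ^ 2 ≤ s := by nlinarith
  have hball : ∀ a b c : ℝ, |a| ≤ s → |b| ≤ s → -s ^ 2 ≤ c → c ≤ 0 → (a, b, c) ∈ pball δ := by
    intro a b c ha hb hc hc'
    have ha' := sq_le_sq' (abs_le.1 ha).1 (abs_le.1 ha).2
    have hb' := sq_le_sq' (abs_le.1 hb).1 (abs_le.1 hb).2
    have hs' : s ^ 2 ≤ (δ / 2) ^ 2 := by gcongr
    have hδ' : 0 < δ ^ 2 := by positivity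
    exact ⟨by dsimp only; linarith, by dsimp only; linarith, hc'⟩
  obtain ⟨M, hM, hbd⟩ := exists_derivative_bound su sv
    (isCompact_Icc.prod (isCompact_Icc.prod isCompact_Icc) :
      IsCompact (Set.Icc (-s) 0 ×ˢ Set.Icc (-s) s ×ˢ Set.Icc (-s ^ 2) 0))
  obtain ⟨K, hK⟩ : ∃ K : ℝ, 2 + 20 * M ^ 2 ≤ K := ⟨_, le_rfl⟩
  have hK0 : 0 < K := by nlinarith [sq_nonneg M]
  obtain ⟨r, hr, hrs, hrK⟩ : ∃ r : ℝ, 0 < r ∧ 2 * r ≤ s ^ 2 ∧ K * r ≤ 1 := by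
    refine ⟨min (s ^ 2 / 2) (1 / K), by positivity, ?_, ?_⟩
    · linarith [min_le_left (s ^ 2 / 2) (1 / K)]
    · calc K * min (s ^ 2 / 2) (1 / K) ≤ K * (1 / K) := by gcongr; exact min_le_right _ _
        _ = 1 := by field_simp
  have hrs' : r ≤ s := by linarith
  obtain ⟨m, hm, hmw⟩ : ∃ m : ℝ, 0 < m ∧ ∀ b c, |b| ≤ s → -s ^ 2 ≤ c → c ≤ 0 →
      m ≤ v (-r) b c - u (-r) b c := by
    have hcomp : IsCompact (Set.Icc (-s) s ×ˢ Set.Icc (-s ^ 2) 0) :=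
      isCompact_Icc.prod isCompact_Icc
    have hcont : Continuous fun q : ℝ × ℝ => v (-r) q.1 q.2 - u (-r) q.1 q.2 :=
      (sv.continuous.comp (by fun_prop : Continuous fun q : ℝ × ℝ => (-r, q.1, q.2))).sub
        (su.continuous.comp (by fun_prop : Continuous fun q : ℝ × ℝ => (-r, q.1, q.2)))
    obtain ⟨q, hq, hqmin⟩ := hcomp.exists_isMinOn
      ⟨(0, 0), ⟨by linarith, hs.le⟩, ⟨by nlinarith, le_rfl⟩⟩ hcont.continuousOn
    refine ⟨_, sub_pos.2 (hlt (-r, q.1, q.2) (hball _ _ _ ?_ (abs_le.2 hq.1) hq.2.1 hq.2.2)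
      (by simpa using hr)), fun b c hb hc hc' =>
        isMinOn_iff.1 hqmin (b, c) ⟨abs_le.1 hb, hc, hc'⟩⟩
    rwa [abs_neg, abs_of_pos hr]
  have hface : ∀ b c, |b| ≤ s → -s ^ 2 ≤ c → c ≤ 0 → 0 ≤ v 0 b c - u 0 b c := by
    intro b c hb hc hc'
    have hlim := (((sv.hasDerivAt_pd1 0 b c).continuousAt.sub
      (su.hasDerivAt_pd1 0 b c).continuousAt).mono_left
        (nhdsWithin_le_nhds (s := Set.Iio (0 : ℝ))) : Filter.Tendsto _ _ _)
    refine ge_of_tendsto hlim ?_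
    filter_upwards [Ioo_mem_nhdsLT (neg_lt_zero.2 hs)] with a ha
    exact (sub_pos.2 (hlt (a, b, c)
      (hball a b c (abs_le.2 ⟨ha.1.le, by linarith [ha.2]⟩) hb hc hc') ha.2)).le
  set ε := m / (2 * r) with hεdef
  have hε : 0 < ε := by positivity
  have hεr : ε * (2 * r) = m := by rw [hεdef]; field_simp
  have hbarrier : ∀ a b c, -r ≤ a → a ≤ 0 → hopfBarrier K a b c ≤ 2 * r - b ^ 2 + c := by
    intro a b c ha ha'
    have h₁ : K * a ^ 2 ≤ r := by
      have h₂ : a ^ 2 ≤ r ^ 2 := by nlinarith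
      nlinarith
    unfold hopfBarrier
    linarith
  have hgap : ∀ a b c, -r ≤ a → a ≤ 0 → |b| ≤ s → -s ^ 2 ≤ c → c ≤ 0 →
      0 ≤ hopfGap K ε u v a b c := by
    have hcomp : IsCompact (Set.Icc (-r) 0 ×ˢ Set.Icc (-s) s ×ˢ Set.Icc (-s ^ 2) 0) :=
      isCompact_Icc.prod (isCompact_Icc.prod isCompact_Icc)
    obtain ⟨⟨a, b, c⟩, ⟨⟨ha, ha'⟩, ⟨hb, hb'⟩, hc, hc'⟩, hmin⟩ := hcomp.exists_isMinOn
      ⟨(0, 0, 0), ⟨by linarith, le_rfl⟩, ⟨by linarith, hs.le⟩, ⟨by nlinarith, le_rfl⟩⟩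
      (smoothThree_hopfGap K ε su sv).continuous.continuousOn
    dsimp only at ha ha' hb hb' hc hc'
    have hle : ∀ x y z, -r ≤ x → x ≤ 0 → |y| ≤ s → -s ^ 2 ≤ z → z ≤ 0 →
        hopfGap K ε u v a b c ≤ hopfGap K ε u v x y z := fun x y z h₁ h₂ h₃ h₄ h₅ =>
      isMinOn_iff.1 hmin (x, y, z) ⟨⟨h₁, h₂⟩, abs_le.1 h₃, h₄, h₅⟩
    suffices h : 0 ≤ hopfGap K ε u v a b c from
      fun x y z h₁ h₂ h₃ h₄ h₅ => h.trans (hle x y z h₁ h₂ h₃ h₄ h₅)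
    by_contra! hneg
    have hw : 0 ≤ v a b c - u a b c := by
      rcases ha'.lt_or_eq with h | rfl
      · exact (sub_pos.2 (hlt (a, b, c) (hball a b c (abs_le.2 ⟨by linarith, by linarith⟩)
          (abs_le.2 ⟨hb, hb'⟩) hc hc') h)).le
      · exact hface b c (abs_le.2 ⟨hb, hb'⟩) hc hc'
    have hpos : 0 < hopfBarrier K a b c := by
      by_contra! h
      have := mul_nonpos_of_nonneg_of_nonpos hε.le h
      unfold hopfGap at hneg
      linarith
    have hup := hbarrier a b c ha ha'
    have hb2 : b ^ 2 < s ^ 2 := by linarith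
    obtain ⟨hb₁, hb₂⟩ := abs_lt.1 (abs_lt_of_sq_lt_sq hb2 hs.le)
    have hc₁ : -s ^ 2 < c := by nlinarith [sq_nonneg b]
    have ha₁ : -r < a := by
      refine ha.lt_of_ne fun h => ?_
      have h₁ := hmw b c (abs_le.2 ⟨hb, hb'⟩) hc hc'
      have h₂ : ε * hopfBarrier K a b c ≤ ε * (2 * r) :=
        mul_le_mul_of_nonneg_left (by nlinarith [sq_nonneg b]) hε.le
      unfold hopfGap at hneg
      rw [← h] at hneg h₂
      linarith
    have ha₂ : a < 0 := by
      refine ha'.lt_of_ne fun h => ?_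
      rw [h, hopfBarrier] at hpos
      nlinarith [sq_nonneg b]
    have hbox : (a, b, c) ∈ Set.Icc (-s) 0 ×ˢ Set.Icc (-s) s ×ˢ Set.Icc (-s ^ 2) 0 :=
      ⟨⟨by dsimp only; linarith, ha'⟩, ⟨hb, hb'⟩, hc, hc'⟩
    obtain ⟨h₁, h₂, h₃, h₄, h₅, h₆, h₇, h₈, h₉⟩ := hbd a b c hbox
    refine not_parabolic_min_hopfGap hu hv
      ⟨hball a b c (abs_le.2 ⟨by linarith, by linarith⟩) (abs_le.2 ⟨hb, hb'⟩) hc hc', ha'⟩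
      hε hM hK ?_ (abs_le.2 ⟨by linarith, by linarith⟩) h₁ h₂ h₃ h₄ h₅ h₆ h₇ h₈ h₉ ?_ hc₁
      fun z hz => hle a b z ha ha' (abs_le.2 ⟨hb, hb'⟩) hz.1 (hz.2.trans hc')
    · rw [abs_mul, abs_of_pos hK0, abs_of_neg ha₂]
      nlinarith
    · filter_upwards [prod_mem_nhds (Ioo_mem_nhds ha₁ ha₂) (Ioo_mem_nhds hb₁ hb₂)] with q hq
      exact hle q.1 q.2 c hq.1.1.le hq.1.2.le (abs_le.2 ⟨hq.2.1.le, hq.2.2.le⟩) hc hc'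
  have hline := (smoothThree_hopfGap K ε su sv).hasDerivAt_pd1 0 0 0
  have hnonpos := hline.nonpos_of_past_min (neg_lt_zero.2 hr) fun x hx => by
    have h₀ : hopfGap K ε u v 0 0 0 = 0 := by simp [hopfGap, hopfBarrier, heq]
    rw [h₀]
    exact hgap x 0 0 hx.1 hx.2 (by simpa using hs.le) (by nlinarith) le_rfl
  rw [pd1_hopfGap K ε su sv] at hnonpos
  linarith
end
end

section
/- Strong maximum principle for graphical mean curvature flow: let δ > 0 and let u and v be graphical solutions of the mean curvature flow in P(0,δ). Suppose that u(0,0) = v(0,0) and that u ≤ v everywhere in P(0,δ). Then u = v in P(0,δ). -/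
noncomputable section

section Smooth

variable {f : ℝ → ℝ → ℝ → ℝ}

theorem pd1_eq_fderiv (hf : ContDiff ℝ (⊤ : ℕ∞) (fun p : ℝ × ℝ × ℝ => f p.1 p.2.1 p.2.2))
    (x y t : ℝ) :
    pd1 f x y t = fderiv ℝ (fun p : ℝ × ℝ × ℝ => f p.1 p.2.1 p.2.2) (x, y, t) (1, 0, 0) := by
  have h := (hf.differentiable (by simp) (x, y, t)).hasFDerivAt
  have hc : HasDerivAt (fun s : ℝ => ((s, y, t) : ℝ × ℝ × ℝ)) (1, 0, 0) x :=
    (hasDerivAt_id x).prodMk ((hasDerivAt_const x y).prodMk (hasDerivAt_const x t))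
  exact (h.comp_hasDerivAt x hc).deriv

theorem pd2_eq_fderiv (hf : ContDiff ℝ (⊤ : ℕ∞) (fun p : ℝ × ℝ × ℝ => f p.1 p.2.1 p.2.2))
    (x y t : ℝ) :
    pd2 f x y t = fderiv ℝ (fun p : ℝ × ℝ × ℝ => f p.1 p.2.1 p.2.2) (x, y, t) (0, 1, 0) := by
  have h := (hf.differentiable (by simp) (x, y, t)).hasFDerivAt
  have hc : HasDerivAt (fun s : ℝ => ((x, s, t) : ℝ × ℝ × ℝ)) (0, 1, 0) y :=
    (hasDerivAt_const y x).prodMk ((hasDerivAt_id y).prodMk (hasDerivAt_const y t))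
  exact (h.comp_hasDerivAt y hc).deriv

theorem hasDerivAt_pdt (hf : ContDiff ℝ (⊤ : ℕ∞) (fun p : ℝ × ℝ × ℝ => f p.1 p.2.1 p.2.2))
    (x y t : ℝ) : HasDerivAt (fun s => f x y s) (pdt f x y t) t := by
  have h := (hf.differentiable (by simp) (x, y, t)).hasFDerivAt
  have hc : HasDerivAt (fun s : ℝ => ((x, y, s) : ℝ × ℝ × ℝ)) (0, 0, 1) t :=
    (hasDerivAt_const t x).prodMk ((hasDerivAt_const t y).prodMk (hasDerivAt_id t))
  exact (h.comp_hasDerivAt t hc).differentiableAt.hasDerivAt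

theorem contDiff_fderiv_apply {F : ℝ × ℝ × ℝ → ℝ} (hF : ContDiff ℝ (⊤ : ℕ∞) F)
    (w : ℝ × ℝ × ℝ) : ContDiff ℝ (⊤ : ℕ∞) (fun p => fderiv ℝ F p w) :=
  (hF.fderiv_right (m := (⊤ : ℕ∞)) (by simp)).clm_apply contDiff_const

theorem contDiff_pd1 (hf : ContDiff ℝ (⊤ : ℕ∞) (fun p : ℝ × ℝ × ℝ => f p.1 p.2.1 p.2.2)) :
    ContDiff ℝ (⊤ : ℕ∞) (fun p : ℝ × ℝ × ℝ => pd1 f p.1 p.2.1 p.2.2) := by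
  simpa only [pd1_eq_fderiv hf] using contDiff_fderiv_apply hf (1, 0, 0)

theorem contDiff_pd2 (hf : ContDiff ℝ (⊤ : ℕ∞) (fun p : ℝ × ℝ × ℝ => f p.1 p.2.1 p.2.2)) :
    ContDiff ℝ (⊤ : ℕ∞) (fun p : ℝ × ℝ × ℝ => pd2 f p.1 p.2.1 p.2.2) := by
  simpa only [pd2_eq_fderiv hf] using contDiff_fderiv_apply hf (0, 1, 0)

theorem continuous_pdt (hf : ContDiff ℝ (⊤ : ℕ∞) (fun p : ℝ × ℝ × ℝ => f p.1 p.2.1 p.2.2)) :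
    Continuous (fun p : ℝ × ℝ × ℝ => pdt f p.1 p.2.1 p.2.2) := by
  have key : ∀ x y t, pdt f x y t =
      fderiv ℝ (fun p : ℝ × ℝ × ℝ => f p.1 p.2.1 p.2.2) (x, y, t) (0, 0, 1) := by
    intro x y t
    have h := (hf.differentiable (by simp) (x, y, t)).hasFDerivAt
    have hc : HasDerivAt (fun s : ℝ => ((x, y, s) : ℝ × ℝ × ℝ)) (0, 0, 1) t :=
      (hasDerivAt_const t x).prodMk ((hasDerivAt_const t y).prodMk (hasDerivAt_id t))
    exact (h.comp_hasDerivAt t hc).deriv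
  simpa only [key] using (contDiff_fderiv_apply hf (0, 0, 1)).continuous

/-- Chain rule along a spatial line. -/
theorem hasDerivAt_line (hf : ContDiff ℝ (⊤ : ℕ∞) (fun p : ℝ × ℝ × ℝ => f p.1 p.2.1 p.2.2))
    (x y t a b s : ℝ) :
    HasDerivAt (fun s => f (x + s * a) (y + s * b) t)
      (a * pd1 f (x + s * a) (y + s * b) t + b * pd2 f (x + s * a) (y + s * b) t) s := by
  have h := (hf.differentiable (by simp) (x + s * a, y + s * b, t)).hasFDerivAt
  have hc : HasDerivAt (fun s : ℝ => ((x + s * a, y + s * b, t) : ℝ × ℝ × ℝ)) (a, b, 0) s := by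
    refine HasDerivAt.prodMk ?_ (HasDerivAt.prodMk ?_ (hasDerivAt_const s t))
    · simpa using ((hasDerivAt_id s).mul_const a).const_add x
    · simpa using ((hasDerivAt_id s).mul_const b).const_add y
  have h2 := h.comp_hasDerivAt s hc
  rw [pd1_eq_fderiv hf, pd2_eq_fderiv hf]
  have hv : ((a, b, 0) : ℝ × ℝ × ℝ) = a • (1, 0, 0) + b • (0, 1, 0) := by simp
  rw [hv, map_add, map_smul, map_smul, smul_eq_mul, smul_eq_mul] at h2
  exact h2

end Smooth

/-- Necessary second-order condition at a local minimum. -/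
theorem second_deriv_nonneg_of_isLocalMin {g g' : ℝ → ℝ} {g'' x : ℝ}
    (h1 : ∀ s, HasDerivAt g (g' s) s) (h2 : HasDerivAt g' g'' x) (hmin : IsLocalMin g x) :
    0 ≤ g'' := by
  by_contra! hneg
  have hd : deriv g = g' := funext fun s => (h1 s).deriv
  have hmax : IsLocalMax g x := by
    apply isLocalMax_of_deriv_deriv_neg _ hmin.deriv_eq_zero (h1 x).continuousAt
    rwa [hd, h2.deriv]
  have hconst : g =ᶠ[nhds x] fun _ => g x := by
    filter_upwards [hmin, hmax] with y hy1 hy2 using le_antisymm hy2 hy1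
  have h0 : g' =ᶠ[nhds x] fun _ => 0 := by
    have := hconst.deriv
    rw [hd] at this
    simpa using this
  have := (h2.congr_of_eventuallyEq h0.symm).unique (hasDerivAt_const x (0 : ℝ))
  linarith

/-- A function that is minimal among nearby earlier times has nonpositive time derivative. -/
theorem deriv_nonpos_of_le_left {g : ℝ → ℝ} {g' x : ℝ} (h : HasDerivAt g g' x)
    (hmin : ∀ᶠ s in nhdsWithin x (Set.Iio x), g x ≤ g s) : g' ≤ 0 := by
  have ht := (hasDerivWithinAt_iff_tendsto_slope' (s := Set.Iio x) (by simp)).1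
    h.hasDerivWithinAt
  refine le_of_tendsto ht ?_
  filter_upwards [hmin, self_mem_nhdsWithin] with s hs hsx
  rw [slope_def_field]
  exact div_nonpos_of_nonneg_of_nonpos (by linarith) (by linarith [Set.mem_Iio.1 hsx])

/-- The equation multiplied by `1 + |Df|²`. -/
theorem IsGraphicalMCF.polynomial_eq {S : Set (ℝ × ℝ × ℝ)} {f : ℝ → ℝ → ℝ → ℝ}
    (hf : IsGraphicalMCF S f) {x y t : ℝ} (hp : (x, y, t) ∈ S) :
    (1 + pd1 f x y t ^ 2 + pd2 f x y t ^ 2) * pdt f x y t =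
      (1 + pd2 f x y t ^ 2) * pd11 f x y t
      - pd1 f x y t * pd2 f x y t * (pd12 f x y t + pd21 f x y t)
      + (1 + pd1 f x y t ^ 2) * pd22 f x y t := by
  have h := hf.2 _ hp
  have hQ : gradQ f x y t = 1 + pd1 f x y t ^ 2 + pd2 f x y t ^ 2 := rfl
  have hpos : 1 + pd1 f x y t ^ 2 + pd2 f x y t ^ 2 ≠ 0 := by positivity
  simp only [hQ] at h
  rw [h]
  field_simp
  ring

/-- The bound on the lower order coefficients of the linearised equation. -/
theorem lower_order_bound {M p₁ p₂ q₁ q₂ A B D T : ℝ}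
    (hp₁ : |p₁| ≤ M) (hp₂ : |p₂| ≤ M) (hq₁ : |q₁| ≤ M) (hq₂ : |q₂| ≤ M)
    (hA : |A| ≤ M) (hB : |B| ≤ 2 * M) (hD : |D| ≤ M) (hT : |T| ≤ M) :
    -(6 * M ^ 2 * (|p₁ - q₁| + |p₂ - q₂|)) ≤
      (p₂ ^ 2 - q₂ ^ 2) * A - (p₁ * p₂ - q₁ * q₂) * B + (p₁ ^ 2 - q₁ ^ 2) * D
      - (p₁ ^ 2 + p₂ ^ 2 - q₁ ^ 2 - q₂ ^ 2) * T := by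
  have hM : 0 ≤ M := (abs_nonneg _).trans hp₁
  have hid : (p₂ ^ 2 - q₂ ^ 2) * A - (p₁ * p₂ - q₁ * q₂) * B + (p₁ ^ 2 - q₁ ^ 2) * D
      - (p₁ ^ 2 + p₂ ^ 2 - q₁ ^ 2 - q₂ ^ 2) * T =
      (p₁ - q₁) * ((p₁ + q₁) * (D - T) - p₂ * B)
      + (p₂ - q₂) * ((p₂ + q₂) * (A - T) - q₁ * B) := by ring
  have bound : ∀ a b d e c : ℝ, |a| ≤ M → |b| ≤ M → |d| ≤ M → |e| ≤ M → |c| ≤ M →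
      |(a + b) * (d - e) - c * B| ≤ 6 * M ^ 2 := by
    intro a b d e c ha hb hd he hc
    calc |(a + b) * (d - e) - c * B| ≤ |(a + b) * (d - e)| + |c * B| := abs_sub _ _
      _ = |a + b| * |d - e| + |c| * |B| := by rw [abs_mul, abs_mul]
      _ ≤ (2 * M) * (2 * M) + M * (2 * M) := by
          have h1 : |a + b| ≤ 2 * M := (abs_add_le a b).trans (by linarith)
          have h2 : |d - e| ≤ 2 * M := (abs_sub d e).trans (by linarith)
          gcongr
      _ = 6 * M ^ 2 := by ring
  have h1 := bound p₁ q₁ D T p₂ hp₁ hq₁ hD hT hp₂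
  have h2 := bound p₂ q₂ A T q₁ hp₂ hq₂ hA hT hq₁
  have e1 : |(p₁ - q₁) * ((p₁ + q₁) * (D - T) - p₂ * B)| ≤ |p₁ - q₁| * (6 * M ^ 2) := by
    rw [abs_mul]; gcongr
  have e2 : |(p₂ - q₂) * ((p₂ + q₂) * (A - T) - q₁ * B)| ≤ |p₂ - q₂| * (6 * M ^ 2) := by
    rw [abs_mul]; gcongr
  rw [hid]
  linarith [neg_abs_le ((p₁ - q₁) * ((p₁ + q₁) * (D - T) - p₂ * B)),
    neg_abs_le ((p₂ - q₂) * ((p₂ + q₂) * (A - T) - q₁ * B))]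

/-- The coefficient of the linear term in the subsolution inequality for the barrier. -/
def barrierSlope (M r k₁ k₂ : ℝ) : ℝ :=
  4 * (1 + 2 * M ^ 2) * r * (|k₁| + |k₂|) + 16 + 8 * M ^ 2 + 48 * M ^ 2 * r

/-- The exponential decay rate which turns the barrier into a strict subsolution. -/
def barrierRate (M r k₁ k₂ : ℝ) : ℝ := barrierSlope M r k₁ k₂ ^ 2 / (16 * r ^ 2)

/-- The barrier is a strict subsolution of every linearised equation with coefficients
bounded in terms of `M`. -/
theorem barrier_strict_subsolution {M r k₁ k₂ p₁ p₂ y₁ y₂ z : ℝ} (hr : 0 < r) (hz : 0 ≤ z)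
    (hy : z = r ^ 2 - y₁ ^ 2 - y₂ ^ 2) (hp₁ : |p₁| ≤ M) (hp₂ : |p₂| ≤ M) :
    (1 + p₁ ^ 2 + p₂ ^ 2) * (-barrierRate M r k₁ k₂ * z ^ 2 + 4 * z * (y₁ * k₁ + y₂ * k₂)) <
      (1 + p₂ ^ 2) * (8 * y₁ ^ 2 - 4 * z) - p₁ * p₂ * (16 * y₁ * y₂)
      + (1 + p₁ ^ 2) * (8 * y₂ ^ 2 - 4 * z)
      - 6 * M ^ 2 * (|4 * z * y₁| + |4 * z * y₂|) := by
  have hM : 0 ≤ M := (abs_nonneg _).trans hp₁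
  have hP₁ : p₁ ^ 2 ≤ M ^ 2 := sq_le_sq' (abs_le.1 hp₁).1 (abs_le.1 hp₁).2
  have hP₂ : p₂ ^ 2 ≤ M ^ 2 := sq_le_sq' (abs_le.1 hp₂).1 (abs_le.1 hp₂).2
  have hy₁ : |y₁| ≤ r := abs_le_of_sq_le_sq (by nlinarith [sq_nonneg y₂]) hr.le
  have hy₂ : |y₂| ≤ r := abs_le_of_sq_le_sq (by nlinarith [sq_nonneg y₁]) hr.le
  have hK : 0 ≤ barrierRate M r k₁ k₂ := by unfold barrierRate; positivity
  have htransport : (1 + p₁ ^ 2 + p₂ ^ 2) * (4 * z * (y₁ * k₁ + y₂ * k₂)) ≤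
      (1 + 2 * M ^ 2) * (4 * z * (r * (|k₁| + |k₂|))) := by
    have h1 : y₁ * k₁ ≤ r * |k₁| := by
      calc y₁ * k₁ ≤ |y₁ * k₁| := le_abs_self _
        _ = |y₁| * |k₁| := abs_mul _ _
        _ ≤ r * |k₁| := by gcongr
    have h2 : y₂ * k₂ ≤ r * |k₂| := by
      calc y₂ * k₂ ≤ |y₂ * k₂| := le_abs_self _
        _ = |y₂| * |k₂| := abs_mul _ _
        _ ≤ r * |k₂| := by gcongr
    calc (1 + p₁ ^ 2 + p₂ ^ 2) * (4 * z * (y₁ * k₁ + y₂ * k₂))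
        ≤ (1 + p₁ ^ 2 + p₂ ^ 2) * (4 * z * (r * (|k₁| + |k₂|))) := by
          gcongr; linarith
      _ ≤ _ := mul_le_mul_of_nonneg_right (by linarith) (by positivity)
  have hdecay : barrierRate M r k₁ k₂ * z ^ 2 ≤
      (1 + p₁ ^ 2 + p₂ ^ 2) * (barrierRate M r k₁ k₂ * z ^ 2) :=
    le_mul_of_one_le_left (by positivity) (by nlinarith [sq_nonneg p₁, sq_nonneg p₂])
  have hgrad : 6 * M ^ 2 * (|4 * z * y₁| + |4 * z * y₂|) ≤ 48 * M ^ 2 * r * z := by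
    have h : ∀ y : ℝ, |y| ≤ r → |4 * z * y| ≤ 4 * z * r := by
      intro y h
      rw [abs_mul, abs_of_nonneg (by positivity : 0 ≤ 4 * z)]
      gcongr
    calc 6 * M ^ 2 * (|4 * z * y₁| + |4 * z * y₂|)
        ≤ 6 * M ^ 2 * (4 * z * r + 4 * z * r) := by
          gcongr
          · exact h _ hy₁
          · exact h _ hy₂
      _ = _ := by ring
  have hellip : 8 * (r ^ 2 - z) - 4 * z * (2 + 2 * M ^ 2) ≤
      (1 + p₂ ^ 2) * (8 * y₁ ^ 2 - 4 * z) - p₁ * p₂ * (16 * y₁ * y₂)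
      + (1 + p₁ ^ 2) * (8 * y₂ ^ 2 - 4 * z) := by
    have h1 : 4 * z * (p₁ ^ 2 + p₂ ^ 2) ≤ 4 * z * (2 * M ^ 2) := by gcongr; linarith
    nlinarith [sq_nonneg (p₂ * y₁ - p₁ * y₂)]
  have hsquare : barrierSlope M r k₁ k₂ * z < barrierRate M r k₁ k₂ * z ^ 2 + 8 * r ^ 2 := by
    have h : barrierRate M r k₁ k₂ * z ^ 2 + 8 * r ^ 2 - barrierSlope M r k₁ k₂ * z =
        (barrierSlope M r k₁ k₂ * z / (4 * r) - 2 * r) ^ 2 + 4 * r ^ 2 := by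
      unfold barrierRate
      field_simp
      ring
    have : 0 < (barrierSlope M r k₁ k₂ * z / (4 * r) - 2 * r) ^ 2 + 4 * r ^ 2 := by positivity
    linarith
  have hslope : barrierSlope M r k₁ k₂ * z = (1 + 2 * M ^ 2) * (4 * z * (r * (|k₁| + |k₂|)))
      + 16 * z + 8 * M ^ 2 * z + 48 * M ^ 2 * r * z := by
    unfold barrierSlope; ring
  linarith

/-- The one-sided derivative conditions at a negative interior minimum of `v - u - φ`, with `φ`
the barrier, are incompatible with the flow equations for `u` and `v`. -/
theorem touching_contradiction {M r k₁ k₂ E y₁ y₂ z : ℝ} (hr : 0 < r) (hz : 0 ≤ z) (hE : 0 < E)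
    (hy : z = r ^ 2 - y₁ ^ 2 - y₂ ^ 2)
    {p₁ p₂ q₁ q₂ U₁₁ U₁₂ U₂₁ U₂₂ V₁₁ V₁₂ V₂₁ V₂₂ ut vt : ℝ}
    (hp₁ : |p₁| ≤ M) (hp₂ : |p₂| ≤ M) (hq₁ : |q₁| ≤ M) (hq₂ : |q₂| ≤ M)
    (hU₁₁ : |U₁₁| ≤ M) (hU₁₂ : |U₁₂| ≤ M) (hU₂₁ : |U₂₁| ≤ M) (hU₂₂ : |U₂₂| ≤ M) (hut : |ut| ≤ M)
    (hu : (1 + q₁ ^ 2 + q₂ ^ 2) * ut =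
      (1 + q₂ ^ 2) * U₁₁ - q₁ * q₂ * (U₁₂ + U₂₁) + (1 + q₁ ^ 2) * U₂₂)
    (hv : (1 + p₁ ^ 2 + p₂ ^ 2) * vt =
      (1 + p₂ ^ 2) * V₁₁ - p₁ * p₂ * (V₁₂ + V₂₁) + (1 + p₁ ^ 2) * V₂₂)
    (hg₁ : p₁ - q₁ = -(E * (4 * z * y₁))) (hg₂ : p₂ - q₂ = -(E * (4 * z * y₂)))
    (hH : ∀ a b : ℝ, 0 ≤ a * (a * (V₁₁ - U₁₁) + b * (V₁₂ - U₁₂))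
      + b * (a * (V₂₁ - U₂₁) + b * (V₂₂ - U₂₂))
      - E * (8 * (a * y₁ + b * y₂) ^ 2 - 4 * z * (a ^ 2 + b ^ 2)))
    (ht : vt - ut ≤ E * (-barrierRate M r k₁ k₂ * z ^ 2 + 4 * z * (y₁ * k₁ + y₂ * k₂))) :
    False := by
  have hsub := mul_lt_mul_of_pos_left
    (barrier_strict_subsolution (k₁ := k₁) (k₂ := k₂) hr hz hy hp₁ hp₂) hE
  have hlow := lower_order_bound hp₁ hp₂ hq₁ hq₂ hU₁₁
    ((abs_add_le U₁₂ U₂₁).trans (by linarith)) hU₂₂ hut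
  rw [hg₁, hg₂, abs_neg, abs_neg, abs_mul E, abs_mul E, abs_of_pos hE] at hlow
  have ht' := mul_le_mul_of_nonneg_left ht (by positivity : 0 ≤ 1 + p₁ ^ 2 + p₂ ^ 2)
  have h1 := hH 1 0
  have h2 := hH 0 1
  have h3 := hH p₂ (-p₁)
  linarith

/-- The barrier: a bump supported in a tube around the line `x = t k`. -/
def barrier (ε K r k₁ k₂ : ℝ) (x y t : ℝ) : ℝ :=
  ε * Real.exp (-K * t) * (r ^ 2 - (x - t * k₁) ^ 2 - (y - t * k₂) ^ 2) ^ 2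

/-- The closed tube of radius `r` around the segment `x = t k`, `t₀ ≤ t ≤ 0`. -/
def tube (r k₁ k₂ t₀ : ℝ) : Set (ℝ × ℝ × ℝ) :=
  {p | t₀ ≤ p.2.2 ∧ p.2.2 ≤ 0 ∧ (p.1 - p.2.2 * k₁) ^ 2 + (p.2.1 - p.2.2 * k₂) ^ 2 ≤ r ^ 2}

theorem hasDerivAt_barrier_line (ε K r k₁ k₂ x y t a b s : ℝ) :
    HasDerivAt (fun s => barrier ε K r k₁ k₂ (x + s * a) (y + s * b) t)
      (-(ε * Real.exp (-K * t)) * 4 *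
        (r ^ 2 - (x + s * a - t * k₁) ^ 2 - (y + s * b - t * k₂) ^ 2) *
        (a * (x + s * a - t * k₁) + b * (y + s * b - t * k₂))) s := by
  have hx : HasDerivAt (fun s : ℝ => x + s * a - t * k₁) a s := by
    simpa using (((hasDerivAt_id s).mul_const a).const_add x).sub_const (t * k₁)
  have hy : HasDerivAt (fun s : ℝ => y + s * b - t * k₂) b s := by
    simpa using (((hasDerivAt_id s).mul_const b).const_add y).sub_const (t * k₂)
  have h := (((((hx.pow 2).const_sub (r ^ 2)).sub (hy.pow 2)).pow 2).const_mul
    (ε * Real.exp (-K * t)))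
  refine h.congr_deriv ?_
  simp
  ring

theorem hasDerivAt_deriv_barrier_line (ε K r k₁ k₂ x y t a b : ℝ) :
    HasDerivAt (fun s => -(ε * Real.exp (-K * t)) * 4 *
        (r ^ 2 - (x + s * a - t * k₁) ^ 2 - (y + s * b - t * k₂) ^ 2) *
        (a * (x + s * a - t * k₁) + b * (y + s * b - t * k₂)))
      (ε * Real.exp (-K * t) * (8 * (a * (x - t * k₁) + b * (y - t * k₂)) ^ 2
        - 4 * (r ^ 2 - (x - t * k₁) ^ 2 - (y - t * k₂) ^ 2) * (a ^ 2 + b ^ 2))) 0 := by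
  have hx : HasDerivAt (fun s : ℝ => x + s * a - t * k₁) a 0 := by
    simpa using (((hasDerivAt_id (0 : ℝ)).mul_const a).const_add x).sub_const (t * k₁)
  have hy : HasDerivAt (fun s : ℝ => y + s * b - t * k₂) b 0 := by
    simpa using (((hasDerivAt_id (0 : ℝ)).mul_const b).const_add y).sub_const (t * k₂)
  have h := ((((hx.pow 2).const_sub (r ^ 2)).sub (hy.pow 2)).const_mul
    (-(ε * Real.exp (-K * t)) * 4)).mul ((hx.const_mul a).add (hy.const_mul b))
  refine h.congr_deriv ?_
  simp
  ring

theorem hasDerivAt_barrier_time (ε K r k₁ k₂ x y t : ℝ) :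
    HasDerivAt (fun s => barrier ε K r k₁ k₂ x y s)
      (ε * Real.exp (-K * t) * (-K * (r ^ 2 - (x - t * k₁) ^ 2 - (y - t * k₂) ^ 2) ^ 2
        + 4 * (r ^ 2 - (x - t * k₁) ^ 2 - (y - t * k₂) ^ 2)
          * ((x - t * k₁) * k₁ + (y - t * k₂) * k₂))) t := by
  have hx : HasDerivAt (fun s : ℝ => x - s * k₁) (-k₁) t := by
    simpa using ((hasDerivAt_id t).mul_const k₁).const_sub x
  have hy : HasDerivAt (fun s : ℝ => y - s * k₂) (-k₂) t := by
    simpa using ((hasDerivAt_id t).mul_const k₂).const_sub y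
  have he : HasDerivAt (fun s : ℝ => ε * Real.exp (-K * s)) (ε * (Real.exp (-K * t) * -K)) t := by
    simpa using (((hasDerivAt_id t).const_mul (-K)).exp).const_mul ε
  have h := he.mul ((((hx.pow 2).const_sub (r ^ 2)).sub (hy.pow 2)).pow 2)
  refine h.congr_deriv ?_
  simp
  ring

theorem isCompact_tube (r k₁ k₂ t₀ : ℝ) : IsCompact (tube r k₁ k₂ t₀) := by
  have hclosed : IsClosed (tube r k₁ k₂ t₀) := by
    simp only [tube, Set.ofPred_and]
    exact (isClosed_le (by fun_prop) (by fun_prop)).inter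
      ((isClosed_le (by fun_prop) (by fun_prop)).inter
        (isClosed_le (by fun_prop) (by fun_prop)))
  have himage : tube r k₁ k₂ t₀ ⊆
      Set.image (fun q : ℝ × ℝ × ℝ => (q.1 + q.2.2 * k₁, q.2.1 + q.2.2 * k₂, q.2.2))
      (Set.Icc (-|r|) |r| ×ˢ Set.Icc (-|r|) |r| ×ˢ Set.Icc t₀ 0) := by
    rintro ⟨x, y, t⟩ ⟨h1, h2, h3⟩
    simp only at h1 h2 h3
    refine ⟨(x - t * k₁, y - t * k₂, t), ⟨?_, ?_, h1, h2⟩, by simp⟩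
    · exact abs_le.1 (sq_le_sq.1 (by nlinarith [sq_nonneg (y - t * k₂)]))
    · exact abs_le.1 (sq_le_sq.1 (by nlinarith [sq_nonneg (x - t * k₁)]))
  exact ((isCompact_Icc.prod (isCompact_Icc.prod isCompact_Icc)).image
    (by fun_prop)).of_isClosed_subset hclosed himage

/-- If the tube lies in the domain, positivity on its bottom prevents contact at the top centre. -/
theorem pos_of_tube {S : Set (ℝ × ℝ × ℝ)} {u v : ℝ → ℝ → ℝ → ℝ}
    (hu : IsGraphicalMCF S u) (hv : IsGraphicalMCF S v)
    (hle : ∀ p ∈ S, u p.1 p.2.1 p.2.2 ≤ v p.1 p.2.1 p.2.2)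
    {r k₁ k₂ t₀ η : ℝ} (hr : 0 < r) (ht₀ : t₀ < 0) (hη : 0 < η) (hS : tube r k₁ k₂ t₀ ⊆ S)
    (hbot : ∀ x y, (x, y, t₀) ∈ tube r k₁ k₂ t₀ → η ≤ v x y t₀ - u x y t₀) :
    u 0 0 0 < v 0 0 0 := by
  have hcpt := isCompact_tube r k₁ k₂ t₀
  have bdd : ∀ F : ℝ × ℝ × ℝ → ℝ, Continuous F → ∃ C, 0 ≤ C ∧ ∀ p ∈ tube r k₁ k₂ t₀, |F p| ≤ C := by
    intro F hF
    obtain ⟨C, hC⟩ := hcpt.exists_bound_of_continuousOn hF.continuousOn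
    exact ⟨max C 0, le_max_right _ _, fun p hp => (hC p hp).trans (le_max_left _ _)⟩
  obtain ⟨C₁, hC₁, hp₁⟩ := bdd _ (contDiff_pd1 hv.1).continuous
  obtain ⟨C₂, hC₂, hp₂⟩ := bdd _ (contDiff_pd2 hv.1).continuous
  obtain ⟨C₃, hC₃, hq₁⟩ := bdd _ (contDiff_pd1 hu.1).continuous
  obtain ⟨C₄, hC₄, hq₂⟩ := bdd _ (contDiff_pd2 hu.1).continuous
  obtain ⟨C₅, hC₅, hU₁₁⟩ := bdd _ (contDiff_pd1 (contDiff_pd1 hu.1)).continuous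
  obtain ⟨C₆, hC₆, hU₁₂⟩ := bdd _ (contDiff_pd2 (contDiff_pd1 hu.1)).continuous
  obtain ⟨C₇, hC₇, hU₂₁⟩ := bdd _ (contDiff_pd1 (contDiff_pd2 hu.1)).continuous
  obtain ⟨C₈, hC₈, hU₂₂⟩ := bdd _ (contDiff_pd2 (contDiff_pd2 hu.1)).continuous
  obtain ⟨C₉, hC₉, hut⟩ := bdd _ (continuous_pdt hu.1)
  set M := C₁ + C₂ + C₃ + C₄ + C₅ + C₆ + C₇ + C₈ + C₉ with hM
  set K := barrierRate M r k₁ k₂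
  set ε := η * Real.exp (K * t₀) / r ^ 4 with hε
  have hεpos : 0 < ε := by positivity
  set W : ℝ → ℝ → ℝ → ℝ := fun x y t => v x y t - u x y t - barrier ε K r k₁ k₂ x y t with hW
  have hWc : Continuous (fun p : ℝ × ℝ × ℝ => W p.1 p.2.1 p.2.2) := by
    have h1 := hu.1.continuous
    have h2 := hv.1.continuous
    refine (h2.sub h1).sub ?_
    unfold barrier
    fun_prop
  have h0 : ((0, 0, 0) : ℝ × ℝ × ℝ) ∈ tube r k₁ k₂ t₀ :=
    ⟨ht₀.le, le_rfl, by simp; positivity⟩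
  obtain ⟨⟨x, y, t⟩, hpT, hmin⟩ := hcpt.exists_isMinOn ⟨_, h0⟩ hWc.continuousOn
  by_contra hcon
  have hW0 : W 0 0 0 < 0 := by
    have : 0 < barrier ε K r k₁ k₂ 0 0 0 := by
      unfold barrier
      simp
      positivity
    simp only [hW]
    linarith
  have hWneg : W x y t < 0 := (isMinOn_iff.1 hmin _ h0).trans_lt hW0
  have hwnn := hle _ (hS hpT)
  simp only at hwnn
  obtain ⟨htl, htu, hxy⟩ := id hpT
  simp only at htl htu hxy
  have hint : (x - t * k₁) ^ 2 + (y - t * k₂) ^ 2 < r ^ 2 := by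
    refine lt_of_le_of_ne hxy fun h => ?_
    have : barrier ε K r k₁ k₂ x y t = 0 := by
      unfold barrier
      rw [show r ^ 2 - (x - t * k₁) ^ 2 - (y - t * k₂) ^ 2 = 0 by linarith]
      simp
    simp only [hW] at hWneg
    linarith
  have htgt : t₀ < t := by
    refine lt_of_le_of_ne htl fun h => ?_
    subst h
    have h1 := hbot x y hpT
    have h2 : barrier ε K r k₁ k₂ x y t₀ ≤ η := by
      have hz : (r ^ 2 - (x - t₀ * k₁) ^ 2 - (y - t₀ * k₂) ^ 2) ^ 2 ≤ (r ^ 2) ^ 2 :=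
        pow_le_pow_left₀ (by linarith)
          (by linarith [sq_nonneg (x - t₀ * k₁), sq_nonneg (y - t₀ * k₂)]) 2
      unfold barrier
      calc _ ≤ ε * Real.exp (-K * t₀) * (r ^ 2) ^ 2 := by gcongr
        _ = η * (Real.exp (K * t₀) * Real.exp (-K * t₀)) := by rw [hε]; field_simp
        _ = η := by rw [← Real.exp_add]; simp
    simp only [hW] at hWneg
    linarith
  have hline : ∀ a b : ℝ, IsLocalMin (fun s => W (x + s * a) (y + s * b) t) 0 := by
    intro a b
    have hc : ContinuousAt (fun s : ℝ =>
        (x + s * a - t * k₁) ^ 2 + (y + s * b - t * k₂) ^ 2) 0 := by fun_prop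
    have hev := hc.eventually_lt (continuousAt_const (y := r ^ 2)) (by simpa using hint)
    filter_upwards [hev] with s hs
    have := isMinOn_iff.1 hmin (x + s * a, y + s * b, t) ⟨htl, htu, hs.le⟩
    simpa using this
  have hd1 : ∀ a b s : ℝ, HasDerivAt (fun s => W (x + s * a) (y + s * b) t) _ s := fun a b s =>
    ((hasDerivAt_line hv.1 x y t a b s).sub (hasDerivAt_line hu.1 x y t a b s)).sub
      (hasDerivAt_barrier_line ε K r k₁ k₂ x y t a b s)
  have hd2 : ∀ a b : ℝ, HasDerivAt _ _ (0 : ℝ) := fun a b =>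
    (((((hasDerivAt_line (contDiff_pd1 hv.1) x y t a b 0).const_mul a).add
      ((hasDerivAt_line (contDiff_pd2 hv.1) x y t a b 0).const_mul b)).sub
      (((hasDerivAt_line (contDiff_pd1 hu.1) x y t a b 0).const_mul a).add
      ((hasDerivAt_line (contDiff_pd2 hu.1) x y t a b 0).const_mul b))).sub
      (hasDerivAt_deriv_barrier_line ε K r k₁ k₂ x y t a b))
  have hgrad := fun a b => (hline a b).hasDerivAt_eq_zero (hd1 a b 0)
  have hhess := fun a b => second_deriv_nonneg_of_isLocalMin (hd1 a b) (hd2 a b) (hline a b)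
  have htime := deriv_nonpos_of_le_left (g := fun s => W x y s)
    (((hasDerivAt_pdt hv.1 x y t).sub (hasDerivAt_pdt hu.1 x y t)).sub
      (hasDerivAt_barrier_time ε K r k₁ k₂ x y t)) (by
    have hc : ContinuousAt (fun s : ℝ => (x - s * k₁) ^ 2 + (y - s * k₂) ^ 2) t := by fun_prop
    filter_upwards [(hc.eventually_lt continuousAt_const hint).filter_mono nhdsWithin_le_nhds,
      (lt_mem_nhds htgt).filter_mono nhdsWithin_le_nhds, self_mem_nhdsWithin] with s h1 h2 h3
    exact isMinOn_iff.1 hmin (x, y, s) ⟨h2.le, (Set.mem_Iio.1 h3).le.trans htu, h1.le⟩)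
  have hg₁ := hgrad 1 0
  have hg₂ := hgrad 0 1
  simp only [zero_mul, mul_zero, add_zero, zero_add, one_mul] at hg₁ hg₂ hhess
  refine touching_contradiction (M := M) (k₁ := k₁) (k₂ := k₂)
    (E := ε * Real.exp (-K * t)) (y₁ := x - t * k₁) (y₂ := y - t * k₂)
    hr (by linarith) (by positivity) rfl
    ((hp₁ _ hpT).trans (by linarith)) ((hp₂ _ hpT).trans (by linarith))
    ((hq₁ _ hpT).trans (by linarith)) ((hq₂ _ hpT).trans (by linarith))
    ((hU₁₁ _ hpT).trans (by linarith)) ((hU₁₂ _ hpT).trans (by linarith))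
    ((hU₂₁ _ hpT).trans (by linarith)) ((hU₂₂ _ hpT).trans (by linarith))
    ((hut _ hpT).trans (by linarith))
    (hu.polynomial_eq (hS hpT)) (hv.polynomial_eq (hS hpT))
    (by linarith) (by linarith) ?_ (by linarith)
  intro a b
  have h := hhess a b
  simp only [pd11, pd12, pd21, pd22]
  simp only [pd1, pd2] at h ⊢
  linarith

/-- Positivity at an earlier time propagates to the origin. -/
theorem lt_origin_of_lt_earlier {δ : ℝ} {u v : ℝ → ℝ → ℝ → ℝ}
    (hu : IsGraphicalMCF (pball δ) u) (hv : IsGraphicalMCF (pball δ) v)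
    (hle : ∀ p ∈ pball δ, u p.1 p.2.1 p.2.2 ≤ v p.1 p.2.1 p.2.2) (hδ : 0 < δ)
    {a b t₀ : ℝ} (hab : a ^ 2 + b ^ 2 < δ ^ 2) (ht : -δ ^ 2 < t₀) (ht₀ : t₀ < 0)
    (hlt : u a b t₀ < v a b t₀) : u 0 0 0 < v 0 0 0 := by
  set w : ℝ × ℝ × ℝ → ℝ := fun p => v p.1 p.2.1 p.2.2 - u p.1 p.2.1 p.2.2 with hw
  have hwc : Continuous w := hv.1.continuous.sub hu.1.continuous
  have hw0 : 0 < w (a, b, t₀) := sub_pos.2 hlt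
  obtain ⟨ρ, hρ, hball⟩ := Metric.eventually_nhds_iff.1
    (hwc.continuousAt.eventually (lt_mem_nhds (half_lt_self hw0)))
  set R := Real.sqrt (a ^ 2 + b ^ 2) with hR
  have hR0 : 0 ≤ R := Real.sqrt_nonneg _
  have hR2 : R ^ 2 = a ^ 2 + b ^ 2 := Real.sq_sqrt (by positivity)
  have hRδ : R < δ := by nlinarith
  set r := min (ρ / 2) ((δ - R) / 2) with hr
  have hr0 : 0 < r := lt_min (by linarith) (by linarith)
  have hrρ : r < ρ := (min_le_left _ _).trans_lt (by linarith)
  have hrδ : r + R < δ := by linarith [min_le_right (ρ / 2) ((δ - R) / 2)]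
  refine pos_of_tube hu hv hle (k₁ := a / t₀) (k₂ := b / t₀) hr0 ht₀ (half_pos hw0) ?_ ?_
  · rintro ⟨x, y, t⟩ ⟨h1, h2, h3⟩
    simp only at h1 h2 h3
    refine ⟨?_, by simp only; linarith, h2⟩
    simp only
    set c := t / t₀ with hc
    have hc0 : 0 ≤ c := div_nonneg_of_nonpos h2 ht₀.le
    have hc1 : c ≤ 1 := by rw [hc, div_le_one_of_neg ht₀]; exact h1
    have e1 : t * (a / t₀) = c * a := by rw [hc]; ring
    have e2 : t * (b / t₀) = c * b := by rw [hc]; ring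
    rw [e1, e2] at h3
    set p := x - c * a with hp
    set q := y - c * b with hq
    have hx : x = p + c * a := by rw [hp]; ring
    have hy : y = q + c * b := by rw [hq]; ring
    have hcs : p * a + q * b ≤ r * R := by
      refine abs_le_of_sq_le_sq' ?_ (by positivity) |>.2
      have : (p ^ 2 + q ^ 2) * R ^ 2 ≤ r ^ 2 * R ^ 2 := by gcongr
      rw [hR2] at this
      nlinarith [sq_nonneg (p * b - q * a)]
    have hexp : x ^ 2 + y ^ 2 = (p ^ 2 + q ^ 2) + 2 * c * (p * a + q * b) + c ^ 2 * R ^ 2 := by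
      rw [hR2, hx, hy]; ring
    have h4 : c * (p * a + q * b) ≤ r * R :=
      (mul_le_mul_of_nonneg_left hcs hc0).trans
        (mul_le_of_le_one_left (by positivity) hc1)
    have h5 : c ^ 2 * R ^ 2 ≤ R ^ 2 :=
      mul_le_of_le_one_left (by positivity) (pow_le_one₀ hc0 hc1)
    nlinarith
  · rintro x y ⟨h1, h2, h3⟩
    simp only [mul_div_cancel₀ _ ht₀.ne] at h3
    have hx : |x - a| ≤ r := abs_le_of_sq_le_sq (by nlinarith [sq_nonneg (y - b)]) hr0.le
    have hy : |y - b| ≤ r := abs_le_of_sq_le_sq (by nlinarith [sq_nonneg (x - a)]) hr0.le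
    refine (hball (y := (x, y, t₀)) ?_).le
    simp only [Prod.dist_eq, Real.dist_eq, sub_self, abs_zero]
    exact max_lt (hx.trans_lt hrρ) (max_lt (hy.trans_lt hrρ) hρ)

/-- Strong maximum principle for graphical mean curvature flow: if `u` and `v` are
graphical solutions of the mean curvature flow in `P(0,δ)` with `u(0,0) = v(0,0)`
and `u ≤ v` everywhere in `P(0,δ)`, then `u = v` in `P(0,δ)`. -/
theorem strong_maximum_principle_graphical_MCF
    (δ : ℝ) (hδ : 0 < δ)
    (u v : ℝ → ℝ → ℝ → ℝ)
    (hu : IsGraphicalMCF (pball δ) u) (hv : IsGraphicalMCF (pball δ) v)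
    (heq : u 0 0 0 = v 0 0 0)
    (hle : ∀ p ∈ pball δ, u p.1 p.2.1 p.2.2 ≤ v p.1 p.2.1 p.2.2) :
    ∀ p ∈ pball δ, u p.1 p.2.1 p.2.2 = v p.1 p.2.1 p.2.2 := by
  rintro ⟨a, b, t⟩ ⟨hab, ht, ht0⟩
  simp only at hab ht ht0 ⊢
  by_contra hne
  have hlt : u a b t < v a b t := lt_of_le_of_ne (hle (a, b, t) ⟨hab, ht, ht0⟩) hne
  have hu' : Continuous fun s => u a b s :=
    hu.1.continuous.comp (by fun_prop : Continuous fun s : ℝ => ((a, b, s) : ℝ × ℝ × ℝ))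
  have hv' : Continuous fun s => v a b s :=
    hv.1.continuous.comp (by fun_prop : Continuous fun s : ℝ => ((a, b, s) : ℝ × ℝ × ℝ))
  have hev : ∀ᶠ s in nhdsWithin t (Set.Iio t), u a b s < v a b s ∧ -δ ^ 2 < s ∧ s < t :=
    ((hu'.continuousAt.eventually_lt hv'.continuousAt hlt).filter_mono nhdsWithin_le_nhds).and
      (((lt_mem_nhds ht).filter_mono nhdsWithin_le_nhds).and self_mem_nhdsWithin)
  obtain ⟨s, hs, hsl, hst⟩ := hev.exists
  exact (lt_origin_of_lt_earlier hu hv hle hδ hab hsl (hst.trans_le ht0) hs).ne heq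
end
end

section
/- Two-sided bound for the shrinker profile: let b > 0 and let u : [2√2, ∞) → ℝ be a differentiable function with u(z) > √2 for all z, satisfying the ODE u′(z) = (w(z)/(2 z u(z)))·(u(z)² − 2), where w : [2√2, ∞) → ℝ satisfies 2 ≤ w(z) ≤ 2 + 16/z² for all z, and suppose u has asymptotic slope b in the sense that u(z)/z → b as z → ∞. Then for every z ≥ 2√2 one has 2 + e^{−1} b² z² ≤ u(z)² ≤ 2 + b² z². -/
open Filter

/-- A real function on `[a, ∞)` with nonnegative derivative is bounded above by its limit
at infinity. -/
theorem le_of_hasDerivWithinAt_nonneg_of_tendsto {f f' : ℝ → ℝ} {a L : ℝ}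
    (hf : ∀ z ∈ Set.Ici a, HasDerivWithinAt f (f' z) (Set.Ici a) z)
    (hf' : ∀ z ∈ Set.Ici a, 0 ≤ f' z) (hL : Tendsto f atTop (nhds L)) :
    ∀ z ∈ Set.Ici a, f z ≤ L := by
  have hmono : MonotoneOn f (Set.Ici a) :=
    monotoneOn_of_hasDerivWithinAt_nonneg (convex_Ici a)
      (fun z hz => (hf z hz).continuousWithinAt)
      (fun z hz => (hf z (interior_subset hz)).mono interior_subset)
      (fun z hz => hf' z (interior_subset hz))
  intro z hz
  refine ge_of_tendsto hL ?_
  filter_upwards [eventually_ge_atTop z] with x hx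
  exact hmono hz (le_trans hz hx) hx

/-- A real function on `[a, ∞)` with nonpositive derivative is bounded below by its limit
at infinity. -/
theorem ge_of_hasDerivWithinAt_nonpos_of_tendsto {f f' : ℝ → ℝ} {a L : ℝ}
    (hf : ∀ z ∈ Set.Ici a, HasDerivWithinAt f (f' z) (Set.Ici a) z)
    (hf' : ∀ z ∈ Set.Ici a, f' z ≤ 0) (hL : Tendsto f atTop (nhds L)) :
    ∀ z ∈ Set.Ici a, L ≤ f z := fun z hz =>
  neg_le_neg_iff.mp <| le_of_hasDerivWithinAt_nonneg_of_tendsto (f := fun z => -f z)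
    (fun z hz => (hf z hz).fun_neg) (fun z hz => neg_nonneg.mpr (hf' z hz)) hL.neg z hz

/-- If `u′ = (w/(2zu))(u² - 2)`, then `F = (u² - 2)/z²` satisfies `F′ = F (w - 2)/z`. -/
theorem hasDerivWithinAt_sq_sub_two_div_sq {u : ℝ → ℝ} {s : Set ℝ} {z c : ℝ}
    (hz : z ≠ 0) (hu : u z ≠ 0)
    (h : HasDerivWithinAt u (c / (2 * z * u z) * ((u z) ^ 2 - 2)) s z) :
    HasDerivWithinAt (fun x => ((u x) ^ 2 - 2) / x ^ 2)
      (((u z) ^ 2 - 2) / z ^ 2 * ((c - 2) / z)) s z := by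
  have hd := ((h.fun_pow 2).sub_const 2).fun_div ((hasDerivWithinAt_id z s).fun_pow 2)
    (pow_ne_zero 2 hz)
  refine hd.congr_deriv ?_
  simp only [id]
  field_simp
  push_cast
  ring

/-- The derivative of `exp (8/z²)`. -/
theorem hasDerivWithinAt_exp_eight_div_sq {s : Set ℝ} {z : ℝ} (hz : z ≠ 0) :
    HasDerivWithinAt (fun x : ℝ => Real.exp (8 / x ^ 2))
      (Real.exp (8 / z ^ 2) * (-16 / z ^ 3)) s z := by
  have hd := ((hasDerivWithinAt_const z s (8 : ℝ)).fun_div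
    ((hasDerivWithinAt_id z s).fun_pow 2) (pow_ne_zero 2 hz)).exp
  refine hd.congr_deriv ?_
  simp only [id]
  field_simp
  push_cast
  ring

/-- Two-sided bound for the shrinker profile: if `u > √2` on `[2√2, ∞)` satisfies
the ODE `u′ = (w/(2zu))(u² - 2)` with `2 ≤ w(z) ≤ 2 + 16/z²`, and `u(z)/z → b > 0`
as `z → ∞`, then `2 + e⁻¹ b² z² ≤ u(z)² ≤ 2 + b² z²` for all `z ≥ 2√2`. -/
theorem shrinker_profile_two_sided_bound
    (b : ℝ) (hb : 0 < b) (u w : ℝ → ℝ)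
    (hu_gt : ∀ z ∈ Set.Ici (2 * Real.sqrt 2), Real.sqrt 2 < u z)
    (hw : ∀ z ∈ Set.Ici (2 * Real.sqrt 2), 2 ≤ w z ∧ w z ≤ 2 + 16 / z ^ 2)
    (hode : ∀ z ∈ Set.Ici (2 * Real.sqrt 2),
      HasDerivWithinAt u (w z / (2 * z * u z) * ((u z) ^ 2 - 2))
        (Set.Ici (2 * Real.sqrt 2)) z)
    (hslope : Tendsto (fun z => u z / z) atTop (nhds b)) :
    ∀ z ∈ Set.Ici (2 * Real.sqrt 2),
      2 + (Real.exp 1)⁻¹ * b ^ 2 * z ^ 2 ≤ (u z) ^ 2 ∧ (u z) ^ 2 ≤ 2 + b ^ 2 * z ^ 2 := by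
  have hzpos : ∀ z ∈ Set.Ici (2 * Real.sqrt 2), 0 < z := fun z hz =>
    lt_of_lt_of_le (by positivity) hz
  have hupos : ∀ z ∈ Set.Ici (2 * Real.sqrt 2), 0 < u z := fun z hz =>
    lt_of_le_of_lt (Real.sqrt_nonneg 2) (hu_gt z hz)
  have hFnonneg : ∀ z ∈ Set.Ici (2 * Real.sqrt 2), 0 ≤ ((u z) ^ 2 - 2) / z ^ 2 := by
    intro z hz
    have := (Real.sqrt_lt' (hupos z hz)).mp (hu_gt z hz)
    exact div_nonneg (by linarith) (sq_nonneg z)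
  have hF := fun z hz => hasDerivWithinAt_sq_sub_two_div_sq (hzpos z hz).ne' (hupos z hz).ne'
    (hode z hz)
  have hinv : Tendsto (fun z : ℝ => (z ^ 2)⁻¹) atTop (nhds 0) :=
    tendsto_inv_atTop_zero.comp (tendsto_pow_atTop two_ne_zero)
  have hFlim : Tendsto (fun z => ((u z) ^ 2 - 2) / z ^ 2) atTop (nhds (b ^ 2)) := by
    have h := (hslope.pow 2).sub (hinv.const_mul 2)
    rw [mul_zero, sub_zero] at h
    refine h.congr fun z => ?_
    rw [div_pow, sub_div, div_eq_mul_inv 2]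
  have hGlim : Tendsto (fun z => ((u z) ^ 2 - 2) / z ^ 2 * Real.exp (8 / z ^ 2)) atTop
      (nhds (b ^ 2)) := by
    have h := hFlim.mul ((hinv.const_mul 8).rexp)
    simpa only [mul_zero, Real.exp_zero, mul_one, ← div_eq_mul_inv] using h
  have hupper := le_of_hasDerivWithinAt_nonneg_of_tendsto hF (fun z hz =>
    mul_nonneg (hFnonneg z hz)
      (div_nonneg (by linarith [(hw z hz).1]) (hzpos z hz).le)) hFlim
  have hlower := ge_of_hasDerivWithinAt_nonpos_of_tendsto
    (fun z hz => (hF z hz).fun_mul (hasDerivWithinAt_exp_eight_div_sq (hzpos z hz).ne'))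
    (fun z hz => by
      have hz0 := hzpos z hz
      have hrate : (w z - 2) / z - 16 / z ^ 3 ≤ 0 := by
        have h : (w z - 2) / z ≤ (16 / z ^ 2) / z := by
          gcongr
          linarith [(hw z hz).2]
        have heq : (16 / z ^ 2) / z = 16 / z ^ 3 := by field_simp
        linarith
      have h := mul_nonpos_of_nonneg_of_nonpos
        (mul_nonneg (hFnonneg z hz) (Real.exp_nonneg (8 / z ^ 2))) hrate
      refine le_of_eq_of_le ?_ h
      ring) hGlim
  intro z hz
  have hz2 : 0 < z ^ 2 := pow_pos (hzpos z hz) 2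
  have hz8 : 8 ≤ z ^ 2 := by
    have h := pow_le_pow_left₀ (by positivity) (Set.mem_Ici.mp hz) 2
    rw [mul_pow, Real.sq_sqrt zero_le_two] at h
    linarith
  constructor
  · have hexp : Real.exp (8 / z ^ 2) ≤ Real.exp 1 :=
      Real.exp_le_exp.mpr ((div_le_one hz2).mpr hz8)
    have h : b ^ 2 ≤ ((u z) ^ 2 - 2) / z ^ 2 * Real.exp 1 :=
      (hlower z hz).trans (mul_le_mul_of_nonneg_left hexp (hFnonneg z hz))
    have h' : (Real.exp 1)⁻¹ * b ^ 2 ≤ ((u z) ^ 2 - 2) / z ^ 2 := by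
      rw [inv_mul_le_iff₀ (Real.exp_pos 1), mul_comm]
      exact h
    linarith [(le_div_iff₀ hz2).mp h']
  · linarith [(div_le_iff₀ hz2).mp (hupper z hz)]
end

section
/- Inner barrier profile estimate: let a ≥ 8 and let u : [√a, a] → ℝ be continuous with 0 < u(z) < √2 for all z ∈ [√a, a), u(a) = 0, and differentiable on [√a, a) with u′(z) = (w(z)/(2 z u(z)))·(u(z)² − 2), where w satisfies 2 ≤ w(z) ≤ 2 + 16/z² for all z. Then u(√a)² ≥ 2 − 2/a. -/
/-- If `u` satisfies `2 u u′ = (w / z)(u² - 2)` with `w ≥ 2` and `u² ≤ 2`, then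
`z ↦ (2 - u(z)²) / z²` is nondecreasing. -/
theorem monotoneOn_two_sub_sq_div_sq {b a : ℝ} (hb : 0 < b) {u w : ℝ → ℝ}
    (hcont : ContinuousOn u (Set.Icc b a))
    (hne : ∀ z ∈ Set.Ioo b a, u z ≠ 0)
    (hsq : ∀ z ∈ Set.Ioo b a, u z ^ 2 ≤ 2)
    (hw : ∀ z ∈ Set.Ioo b a, 2 ≤ w z)
    (hode : ∀ z ∈ Set.Ioo b a,
      HasDerivAt u (w z / (2 * z * u z) * (u z ^ 2 - 2)) z) :
    MonotoneOn (fun z => (2 - u z ^ 2) / z ^ 2) (Set.Icc b a) := by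
  have hderiv : ∀ z ∈ Set.Ioo b a, HasDerivAt (fun z => (2 - u z ^ 2) / z ^ 2)
      ((2 - u z ^ 2) * (w z - 2) / z ^ 3) z := by
    intro z hz
    have hz0 : z ≠ 0 := (hb.trans hz.1).ne'
    have hu0 := hne z hz
    refine ((((hode z hz).pow 2).const_sub 2).div (hasDerivAt_pow 2 z)
      (pow_ne_zero 2 hz0)).congr_deriv ?_
    simp only [Pi.pow_apply]
    field_simp
    push_cast
    ring
  refine monotoneOn_of_hasDerivWithinAt_nonneg
    (f' := fun z => (2 - u z ^ 2) * (w z - 2) / z ^ 3) (convex_Icc b a) ?_ ?_ ?_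
  · refine (continuousOn_const.sub (hcont.pow 2)).div (continuousOn_id.pow 2) ?_
    exact fun z hz => pow_ne_zero 2 (hb.trans_le hz.1).ne'
  · rw [interior_Icc]
    exact fun z hz => (hderiv z hz).hasDerivWithinAt
  · rw [interior_Icc]
    intro z hz
    have hz0 : 0 < z := hb.trans hz.1
    exact div_nonneg (mul_nonneg (sub_nonneg.2 (hsq z hz)) (sub_nonneg.2 (hw z hz)))
      (by positivity)

/-- Inner barrier profile estimate: for `a ≥ 8`, if `u` is continuous on `[√a, a]`
with `0 < u < √2` on `[√a, a)`, `u(a) = 0`, and on `[√a, a)` satisfies the ODE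
`u′ = (w/(2zu))(u² - 2)` with `2 ≤ w(z) ≤ 2 + 16/z²`, then `u(√a)² ≥ 2 - 2/a`. -/
theorem inner_barrier_profile_estimate
    (a : ℝ) (ha : 8 ≤ a) (u w : ℝ → ℝ)
    (hcont : ContinuousOn u (Set.Icc (Real.sqrt a) a))
    (hpos : ∀ z ∈ Set.Ico (Real.sqrt a) a, 0 < u z ∧ u z < Real.sqrt 2)
    (hend : u a = 0)
    (hw : ∀ z ∈ Set.Ico (Real.sqrt a) a, 2 ≤ w z ∧ w z ≤ 2 + 16 / z ^ 2)
    (hode : ∀ z ∈ Set.Ico (Real.sqrt a) a,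
      HasDerivWithinAt u (w z / (2 * z * u z) * ((u z) ^ 2 - 2))
        (Set.Icc (Real.sqrt a) a) z) :
    2 - 2 / a ≤ (u (Real.sqrt a)) ^ 2 := by
  have ha0 : 0 < a := by linarith
  have hsa : 0 < Real.sqrt a := Real.sqrt_pos.2 ha0
  have hle : Real.sqrt a ≤ a := Real.sqrt_le_self_iff.2 (Or.inr (by linarith))
  have hmono := monotoneOn_two_sub_sq_div_sq hsa hcont
    (fun z hz => (hpos z (Set.Ioo_subset_Ico_self hz)).1.ne')
    (fun z hz => by
      obtain ⟨h0, h1⟩ := hpos z (Set.Ioo_subset_Ico_self hz)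
      exact (Real.le_sqrt h0.le zero_le_two).1 h1.le)
    (fun z hz => (hw z (Set.Ioo_subset_Ico_self hz)).1)
    (fun z hz => (hode z (Set.Ioo_subset_Ico_self hz)).hasDerivAt
      (Icc_mem_nhds hz.1 hz.2))
  have h := hmono (Set.left_mem_Icc.2 hle) (Set.right_mem_Icc.2 hle) hle
  simp only [hend, Real.sq_sqrt ha0.le] at h
  rw [div_le_iff₀ ha0] at h
  have h2 : (2 - (0 : ℝ) ^ 2) / a ^ 2 * a = 2 / a := by
    field_simp
    ring
  linarith
end

section
/- Riccati asymptotics: let A > 0, T ∈ ℝ, and let u : (−∞, T] → ℝ be a differentiable function with u(τ) > 0 for all τ and u(τ) → 0 as τ → −∞, satisfying u′(τ) = A·u(τ)² + E(τ), where the error E satisfies E(τ)/u(τ)² → 0 as τ → −∞. Then A·|τ|·u(τ) → 1 as τ → −∞; that is, u(τ) = (1 + o(1))/(A|τ|) as τ → −∞. -/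
open Filter

/-- If `f' → L` as `x → -∞`, then `f x / x → L` as `x → -∞`. -/
theorem tendsto_div_atBot_of_tendsto_deriv {f f' : ℝ → ℝ} {L : ℝ}
    (hf : ∀ᶠ x in atBot, HasDerivAt f (f' x) x) (hf' : Tendsto f' atBot (nhds L)) :
    Tendsto (fun x => f x / x) atBot (nhds L) := by
  rw [Metric.tendsto_nhds]
  intro ε hε
  have hclose : ∀ᶠ x in atBot, dist (f' x) L < ε / 2 :=
    Metric.tendsto_nhds.1 hf' _ (half_pos hε)
  obtain ⟨S, hS⟩ := eventually_atBot.1 (hf.and hclose)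
  set C : ℝ := |f S - L * S| + ε / 2 * |S|
  filter_upwards [eventually_le_atBot S, eventually_lt_atBot 0,
    eventually_lt_atBot (-(C / (ε / 2)))] with x hxS hx0 hxC
  have hmvt : ‖(f x - L * x) - (f S - L * S)‖ ≤ ε / 2 * ‖x - S‖ := by
    refine (convex_Iic S).norm_image_sub_le_of_norm_hasDerivWithin_le
      (f := fun y => f y - L * y) (f' := fun y => f' y - L) (fun y hy => ?_)
      (fun y hy => ?_) Set.self_mem_Iic hxS
    · simpa using ((hS y hy).1.fun_sub ((hasDerivAt_id y).const_mul L)).hasDerivWithinAt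
    · exact (Real.dist_eq _ _ ▸ (hS y hy).2).le
  rw [Real.norm_eq_abs, Real.norm_eq_abs] at hmvt
  have hC : C < ε / 2 * |x| := by
    rw [abs_of_neg hx0]
    have := (div_lt_iff₀ (half_pos hε)).1 (lt_neg.1 hxC)
    linarith
  have hbound : |f x - L * x| < ε * |x| := by
    have h₁ := abs_sub_abs_le_abs_sub (f x - L * x) (f S - L * S)
    have h₂ := mul_le_mul_of_nonneg_left (abs_sub x S) (half_pos hε).le
    simp only [C] at hC
    linarith
  have hquot : f x / x - L = (f x - L * x) / x := by
    field_simp [hx0.ne]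
  rw [Real.dist_eq, hquot, abs_div, div_lt_iff₀ (abs_pos.2 hx0.ne)]
  exact hbound

/-- Riccati asymptotics: a positive solution `u` on `(-∞, T]` of
`u′ = A u² + E` with `u → 0` and `E = o(u²)` as `τ → -∞` satisfies
`u(τ) = (1 + o(1))/(A|τ|)`, i.e. `A |τ| u(τ) → 1` as `τ → -∞`. -/
theorem riccati_asymptotics
    (A T : ℝ) (hA : 0 < A) (u E : ℝ → ℝ)
    (hpos : ∀ τ ≤ T, 0 < u τ)
    (hlim : Tendsto u atBot (nhds 0))
    (hode : ∀ τ ≤ T, HasDerivAt u (A * (u τ) ^ 2 + E τ) τ)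
    (hE : Tendsto (fun τ => E τ / (u τ) ^ 2) atBot (nhds 0)) :
    Tendsto (fun τ => A * |τ| * u τ) atBot (nhds 1) := by
  have hderiv : ∀ᶠ τ in atBot, HasDerivAt (fun s => (u s)⁻¹) (-(A + E τ / (u τ) ^ 2)) τ := by
    filter_upwards [eventually_le_atBot T] with τ hτ
    have hu := (hpos τ hτ).ne'
    have hslope : -(A + E τ / (u τ) ^ 2) = -(A * (u τ) ^ 2 + E τ) / (u τ) ^ 2 := by
      field_simp
    rw [hslope]
    exact (hode τ hτ).fun_inv hu
  have hderiv_lim : Tendsto (fun τ => -(A + E τ / (u τ) ^ 2)) atBot (nhds (-A)) := by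
    simpa using (hE.const_add A).neg
  have hinv := (tendsto_div_atBot_of_tendsto_deriv hderiv hderiv_lim).inv₀ (neg_ne_zero.2 hA.ne')
  have hmain := hinv.const_mul (-A)
  rw [mul_inv_cancel₀ (neg_ne_zero.2 hA.ne')] at hmain
  refine hmain.congr' ?_
  filter_upwards [eventually_lt_atBot 0] with τ hτ
  rw [abs_of_neg hτ, inv_div, div_inv_eq_mul]
  ring
end

section
/- Asymptotics for the neutral-mode ODE system: let A > 0, T ∈ ℝ, and let α = (α₁, α₂, α₃) : (−∞, T] → ℝ³ be continuously differentiable with |α(τ)| > 0 for all τ, α(τ) → 0 as τ → −∞, and α₁(τ) < 0 for all τ. Suppose α satisfies the system α₁′ = −2A α₁² − A(α₂² + α₃²) + E₁, α₂′ = −A α₁ α₂ + E₂, α₃′ = −A α₁ α₃ + E₃, where the errors satisfy Eᵢ(τ)/|α(τ)|² → 0 as τ → −∞ for i = 1,2,3. Then A·|τ|·(|α₁(τ)| + |α(τ)|) → 1 as τ → −∞, and |α₂(τ)| + |α₃(τ)| = o(|α₁(τ)|) as τ → −∞, i.e. (|α₂(τ)| + |α₃(τ)|)/|α₁(τ)|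 → 0. -/
open Filter

open Topology

/-- If `w ∈ [0, 1]` satisfies `w' = ρ (A (1 - w²) + e)` with `e → 0` at `-∞`, where `ρ → 0` is
positive and `ρ' ≤ C ρ²`, then `w → 1` at `-∞`. -/
lemma tendsto_one_of_hasDerivAt_mul_one_sub_sq {A C T : ℝ} (hA : 0 < A) (hC : 0 < C)
    {w ρ e d : ℝ → ℝ} (hw0 : ∀ τ ≤ T, 0 ≤ w τ) (hw1 : ∀ τ ≤ T, w τ ≤ 1)
    (hρ : ∀ τ ≤ T, 0 < ρ τ) (hρ0 : Tendsto ρ atBot (𝓝 0))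
    (hw : ∀ τ ≤ T, HasDerivAt w (ρ τ * (A * (1 - w τ ^ 2) + e τ)) τ)
    (hρ' : ∀ τ ≤ T, HasDerivAt ρ (ρ τ ^ 2 * d τ) τ)
    (he : Tendsto e atBot (𝓝 0)) (hd : ∀ᶠ τ in atBot, d τ ≤ C) :
    Tendsto w atBot (𝓝 1) := by
  have key : ∀ δ > 0, ∀ᶠ τ in atBot, 1 - δ ≤ w τ := by
    intro δ hδ
    have hAδ : 0 < A * δ / 2 := by positivity
    obtain ⟨S, hS⟩ := eventually_atBot.1
      (((he.eventually (lt_mem_nhds (neg_lt_zero.2 hAδ))).and hd).and (eventually_le_atBot T))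
    filter_upwards [eventually_le_atBot S] with t₀ ht₀
    by_contra! hlt
    have hstay : ∀ τ ≤ t₀, w τ ≤ 1 - δ := by
      intro t₁ ht₁
      by_contra! hgt
      have hT : ∀ x ∈ Set.Icc t₁ t₀, x ≤ S := fun x hx => hx.2.trans ht₀
      have := image_le_of_deriv_right_lt_deriv_boundary
        (f := fun τ => -w τ) (f' := fun τ => -(ρ τ * (A * (1 - w τ ^ 2) + e τ)))
        (a := t₁) (b := t₀) (B := fun _ => -(1 - δ)) (B' := fun _ => 0)
        (fun x hx => (hw x (hS x (hT x hx)).2).continuousAt.neg.continuousWithinAt)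
        (fun x hx => (hw x (hS x (hT x ⟨hx.1, hx.2.le⟩)).2).neg.hasDerivWithinAt)
        (neg_le_neg hgt.le) (fun x => hasDerivAt_const x _)
        (by
          intro x hx hxB
          have hx' := hS x (hT x ⟨hx.1, hx.2.le⟩)
          have h0 := hw0 x hx'.2
          have h1 := hw1 x hx'.2
          have hδw : w x = 1 - δ := neg_injective hxB
          have hsq : δ ≤ 1 - w x ^ 2 := by nlinarith
          have := hx'.1.1
          exact neg_lt_zero.2 (mul_pos (hρ x hx'.2) (by nlinarith)))
        (Set.right_mem_Icc.2 ht₁)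
      simp only [neg_le_neg_iff] at this
      linarith
    set c := A * δ / 2 / C with hc
    have hcpos : 0 < c := by positivity
    have hcC : c * C = A * δ / 2 := by rw [hc]; field_simp
    have hder : ∀ τ ≤ t₀, HasDerivAt (fun s => w s - c * Real.log (ρ s))
        (ρ τ * (A * (1 - w τ ^ 2) + e τ) - c * (ρ τ ^ 2 * d τ / ρ τ)) τ := fun τ hτ => by
      have hτT := (hS τ (hτ.trans ht₀)).2
      exact (hw τ hτT).sub (((hρ' τ hτT).log (hρ τ hτT).ne').const_mul c)
    have hmono : MonotoneOn (fun s => w s - c * Real.log (ρ s)) (Set.Iic t₀) := by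
      refine monotoneOn_of_hasDerivWithinAt_nonneg (convex_Iic t₀)
        (fun x hx => (hder x hx).continuousAt.continuousWithinAt)
        (fun x hx => (hder x (Set.mem_Iic.1 (interior_subset hx))).hasDerivWithinAt) ?_
      intro x hx
      have hxt : x ≤ t₀ := Set.mem_Iic.1 (interior_subset hx)
      have hx' := hS x (hxt.trans ht₀)
      have hρx := hρ x hx'.2
      have h0 := hw0 x hx'.2
      have h1 := hstay x hxt
      have hsq : δ ≤ 1 - w x ^ 2 := by nlinarith [hw1 x hx'.2]
      have he' := hx'.1.1
      have hcd : c * d x ≤ A * δ / 2 := by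
        rw [← hcC]; exact mul_le_mul_of_nonneg_left hx'.1.2 hcpos.le
      have : ρ x * (A * (1 - w x ^ 2) + e x) - c * (ρ x ^ 2 * d x / ρ x)
          = ρ x * (A * (1 - w x ^ 2) + e x - c * d x) := by field_simp
      rw [this]
      exact mul_nonneg hρx.le (by nlinarith)
    have hlog : Tendsto (fun τ => Real.log (ρ τ)) atBot atBot :=
      Real.tendsto_log_nhdsGT_zero.comp (tendsto_nhdsWithin_iff.2
        ⟨hρ0, (eventually_le_atBot T).mono fun τ hτ => hρ τ hτ⟩)
    obtain ⟨τ, ⟨hτlog, hτt⟩, hτT⟩ := (((hlog.eventually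
      (eventually_lt_atBot (-(w t₀ - c * Real.log (ρ t₀)) / c))).and
        (eventually_le_atBot t₀)).and (eventually_le_atBot T)).exists
    have hle : w τ - c * Real.log (ρ τ) ≤ w t₀ - c * Real.log (ρ t₀) :=
      hmono hτt Set.self_mem_Iic hτt
    rw [lt_div_iff₀ hcpos] at hτlog
    linarith [hw0 τ hτT]
  rw [tendsto_order]
  refine ⟨fun a ha => ?_, fun a ha => ?_⟩
  · filter_upwards [key ((1 - a) / 2) (by linarith)] with τ hτ
    linarith
  · filter_upwards [eventually_le_atBot T] with τ hτ
    exact (hw1 τ hτ).trans_lt ha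

/-- A function whose derivative tends to `L` at `-∞` is asymptotic to `L τ` there. -/
lemma tendsto_div_self_atBot_of_hasDerivAt {f f' : ℝ → ℝ} {L T : ℝ}
    (hf : ∀ τ ≤ T, HasDerivAt f (f' τ) τ) (hf' : Tendsto f' atBot (𝓝 L)) :
    Tendsto (fun τ => f τ / τ) atBot (𝓝 L) := by
  rw [Metric.tendsto_nhds]
  intro ε hε
  obtain ⟨S, hS⟩ := eventually_atBot.1
    ((Metric.tendsto_nhds.1 hf' (ε / 2) (by positivity)).and (eventually_le_atBot T))
  have hconst : Tendsto (fun τ : ℝ => (|f S - L * S| + ε / 2 * |S|) / |τ|) atBot (𝓝 0) :=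
    tendsto_const_nhds.div_atTop tendsto_abs_atBot_atTop
  filter_upwards [hconst.eventually (gt_mem_nhds (half_pos hε)), eventually_le_atBot S,
    eventually_lt_atBot 0] with τ hτ hτS hτ0
  have hbound : ‖(f τ - L * τ) - (f S - L * S)‖ ≤ ε / 2 * ‖τ - S‖ := by
    refine (convex_Iic S).norm_image_sub_le_of_norm_hasDerivWithin_le
      (f := fun s => f s - L * s) (f' := fun s => f' s - L * 1)
      (fun x hx => ((hf x (hS x hx).2).sub
        ((hasDerivAt_id x).const_mul L)).hasDerivWithinAt) ?_ Set.self_mem_Iic hτS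
    intro x hx
    have := (hS x hx).1
    rw [Real.dist_eq] at this
    simpa using this.le
  rw [Real.norm_eq_abs, Real.norm_eq_abs] at hbound
  have hτpos : 0 < |τ| := abs_pos.2 hτ0.ne
  rw [div_lt_iff₀ hτpos] at hτ
  have hdiv : f τ / τ - L = (f τ - L * τ) / τ := by field_simp [hτ0.ne]
  rw [Real.dist_eq, hdiv, abs_div, div_lt_iff₀ hτpos]
  have h1 := abs_sub_abs_le_abs_sub (f τ - L * τ) (f S - L * S)
  have h2 : ε / 2 * |τ - S| ≤ ε / 2 * (|τ| + |S|) :=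
    mul_le_mul_of_nonneg_left (abs_sub τ S) (by positivity)
  linarith

/-- Asymptotics for the neutral-mode ODE system: if `α = (α₁, α₂, α₃)` is
continuously differentiable on `(-∞, T]`, nonvanishing, tends to `0` as
`τ → -∞`, has `α₁ < 0`, and satisfies the system
`α₁′ = -2A α₁² - A(α₂² + α₃²) + E₁`, `α₂′ = -A α₁ α₂ + E₂`,
`α₃′ = -A α₁ α₃ + E₃` with errors `Eᵢ = o(|α|²)`, then
`A |τ| (|α₁| + |α|) → 1` and `(|α₂| + |α₃|)/|α₁| → 0` as `τ → -∞`. -/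
theorem neutral_mode_system_asymptotics
    (A T : ℝ) (hA : 0 < A) (α₁ α₂ α₃ E₁ E₂ E₃ : ℝ → ℝ)
    (hnorm_pos : ∀ τ ≤ T, 0 < Real.sqrt ((α₁ τ) ^ 2 + (α₂ τ) ^ 2 + (α₃ τ) ^ 2))
    (hlim : Tendsto (fun τ => Real.sqrt ((α₁ τ) ^ 2 + (α₂ τ) ^ 2 + (α₃ τ) ^ 2))
      atBot (nhds 0))
    (hneg : ∀ τ ≤ T, α₁ τ < 0)
    (hode₁ : ∀ τ ≤ T,
      HasDerivAt α₁ (-2 * A * (α₁ τ) ^ 2 - A * ((α₂ τ) ^ 2 + (α₃ τ) ^ 2) + E₁ τ) τ)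
    (hode₂ : ∀ τ ≤ T, HasDerivAt α₂ (-A * α₁ τ * α₂ τ + E₂ τ) τ)
    (hode₃ : ∀ τ ≤ T, HasDerivAt α₃ (-A * α₁ τ * α₃ τ + E₃ τ) τ)
    (hE₁cont : ContinuousOn E₁ (Set.Iic T))
    (hE₂cont : ContinuousOn E₂ (Set.Iic T))
    (hE₃cont : ContinuousOn E₃ (Set.Iic T))
    (hE₁ : Tendsto (fun τ => E₁ τ / ((α₁ τ) ^ 2 + (α₂ τ) ^ 2 + (α₃ τ) ^ 2))
      atBot (nhds 0))
    (hE₂ : Tendsto (fun τ => E₂ τ / ((α₁ τ) ^ 2 + (α₂ τ) ^ 2 + (α₃ τ) ^ 2))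
      atBot (nhds 0))
    (hE₃ : Tendsto (fun τ => E₃ τ / ((α₁ τ) ^ 2 + (α₂ τ) ^ 2 + (α₃ τ) ^ 2))
      atBot (nhds 0)) :
    Tendsto (fun τ => A * |τ| *
        (|α₁ τ| + Real.sqrt ((α₁ τ) ^ 2 + (α₂ τ) ^ 2 + (α₃ τ) ^ 2)))
      atBot (nhds 1) ∧
    Tendsto (fun τ => (|α₂ τ| + |α₃ τ|) / |α₁ τ|) atBot (nhds 0) := by
  set N : ℝ → ℝ := fun τ => (α₁ τ) ^ 2 + (α₂ τ) ^ 2 + (α₃ τ) ^ 2 with hN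
  set ρ : ℝ → ℝ := fun τ => Real.sqrt (N τ) with hρdef
  have hρpos : ∀ τ ≤ T, 0 < ρ τ := hnorm_pos
  have hNpos : ∀ τ ≤ T, 0 < N τ := fun τ hτ => Real.sqrt_pos.1 (hρpos τ hτ)
  have hρsq : ∀ τ ≤ T, ρ τ ^ 2 = α₁ τ ^ 2 + α₂ τ ^ 2 + α₃ τ ^ 2 :=
    fun τ hτ => Real.sq_sqrt (hNpos τ hτ).le
  set e₁ : ℝ → ℝ := fun τ => E₁ τ / N τ with he₁
  set e₂ : ℝ → ℝ := fun τ => E₂ τ / N τ with he₂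
  set e₃ : ℝ → ℝ := fun τ => E₃ τ / N τ with he₃
  have hE₁e : ∀ τ ≤ T, E₁ τ = e₁ τ * ρ τ ^ 2 := fun τ hτ => by
    rw [hρsq τ hτ]; exact (div_mul_cancel₀ _ (hNpos τ hτ).ne').symm
  have hE₂e : ∀ τ ≤ T, E₂ τ = e₂ τ * ρ τ ^ 2 := fun τ hτ => by
    rw [hρsq τ hτ]; exact (div_mul_cancel₀ _ (hNpos τ hτ).ne').symm
  have hE₃e : ∀ τ ≤ T, E₃ τ = e₃ τ * ρ τ ^ 2 := fun τ hτ => by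
    rw [hρsq τ hτ]; exact (div_mul_cancel₀ _ (hNpos τ hτ).ne').symm
  set w : ℝ → ℝ := fun τ => -α₁ τ / ρ τ with hw
  set u : ℝ → ℝ := fun τ => α₂ τ / ρ τ with hu
  set v : ℝ → ℝ := fun τ => α₃ τ / ρ τ with hv
  have hα₁ : ∀ τ ≤ T, α₁ τ = -(ρ τ * w τ) := fun τ hτ => by
    have := (hρpos τ hτ).ne'
    simp only [hw]; field_simp
  have hα₂ : ∀ τ ≤ T, α₂ τ = ρ τ * u τ := fun τ hτ =>
    (mul_div_cancel₀ _ (hρpos τ hτ).ne').symm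
  have hα₃ : ∀ τ ≤ T, α₃ τ = ρ τ * v τ := fun τ hτ =>
    (mul_div_cancel₀ _ (hρpos τ hτ).ne').symm
  have hunit : ∀ τ ≤ T, w τ ^ 2 + u τ ^ 2 + v τ ^ 2 = 1 := fun τ hτ => by
    have h := hρsq τ hτ
    rw [hα₁ τ hτ, hα₂ τ hτ, hα₃ τ hτ] at h
    have h0 : ρ τ ^ 2 ≠ 0 := (pow_pos (hρpos τ hτ) 2).ne'
    exact mul_left_cancel₀ h0 (by linarith)
  have hwpos : ∀ τ ≤ T, 0 < w τ := fun τ hτ =>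
    div_pos (neg_pos.2 (hneg τ hτ)) (hρpos τ hτ)
  have hw1 : ∀ τ ≤ T, w τ ≤ 1 := fun τ hτ => by
    nlinarith [hunit τ hτ, sq_nonneg (u τ), sq_nonneg (v τ), hwpos τ hτ]
  have hu1 : ∀ τ ≤ T, |u τ| ≤ 1 := fun τ hτ => by
    rw [← sq_le_one_iff_abs_le_one]; nlinarith [hunit τ hτ, sq_nonneg (w τ), sq_nonneg (v τ)]
  have hv1 : ∀ τ ≤ T, |v τ| ≤ 1 := fun τ hτ => by
    rw [← sq_le_one_iff_abs_le_one]; nlinarith [hunit τ hτ, sq_nonneg (w τ), sq_nonneg (u τ)]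
  set g : ℝ → ℝ := fun τ => -w τ * e₁ τ + u τ * e₂ τ + v τ * e₃ τ with hg
  have hg_lim : Tendsto g atBot (𝓝 0) := by
    have hsum : Tendsto (fun τ => |e₁ τ| + |e₂ τ| + |e₃ τ|) atBot (𝓝 0) := by
      simpa using (hE₁.abs.add hE₂.abs).add hE₃.abs
    refine squeeze_zero_norm' ?_ hsum
    filter_upwards [eventually_le_atBot T] with τ hτ
    have h1 : |-w τ * e₁ τ| ≤ |e₁ τ| := by
      rw [abs_mul, abs_neg, abs_of_pos (hwpos τ hτ)]
      exact mul_le_of_le_one_left (abs_nonneg _) (hw1 τ hτ)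
    have h2 : |u τ * e₂ τ| ≤ |e₂ τ| := by
      rw [abs_mul]; exact mul_le_of_le_one_left (abs_nonneg _) (hu1 τ hτ)
    have h3 : |v τ * e₃ τ| ≤ |e₃ τ| := by
      rw [abs_mul]; exact mul_le_of_le_one_left (abs_nonneg _) (hv1 τ hτ)
    exact (abs_add_three _ _ _).trans (by linarith)
  have hρ' : ∀ τ ≤ T, HasDerivAt ρ (ρ τ ^ 2 * (2 * A * w τ + g τ)) τ := fun τ hτ => by
    have h := ((((hode₁ τ hτ).pow 2).add ((hode₂ τ hτ).pow 2)).add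
      ((hode₃ τ hτ).pow 2)).sqrt (hNpos τ hτ).ne'
    refine h.congr_deriv ?_
    have h0 := (hρpos τ hτ).ne'
    change _ / (2 * ρ τ) = _
    rw [div_eq_iff (by positivity), hE₁e τ hτ, hE₂e τ hτ, hE₃e τ hτ, hα₁ τ hτ, hα₂ τ hτ, hα₃ τ hτ]
    simp only [hg]
    push_cast
    linear_combination (4 * A * w τ * ρ τ ^ 3) * hunit τ hτ
  have hw' : ∀ τ ≤ T, HasDerivAt w
      (ρ τ * (A * (1 - w τ ^ 2) + (-e₁ τ - w τ * g τ))) τ := fun τ hτ => by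
    refine ((hode₁ τ hτ).neg.div (hρ' τ hτ) (hρpos τ hτ).ne').congr_deriv ?_
    have h0 := (hρpos τ hτ).ne'
    rw [div_eq_iff (by positivity), hE₁e τ hτ, Pi.neg_apply, hα₁ τ hτ, hα₂ τ hτ, hα₃ τ hτ]
    linear_combination (A * ρ τ ^ 3) * hunit τ hτ
  have hwe_lim : Tendsto (fun τ => -e₁ τ - w τ * g τ) atBot (𝓝 0) := by
    have hwg : Tendsto (fun τ => w τ * g τ) atBot (𝓝 0) := by
      refine squeeze_zero_norm' ?_ (by simpa using hg_lim.abs)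
      filter_upwards [eventually_le_atBot T] with τ hτ
      rw [Real.norm_eq_abs, abs_mul, abs_of_pos (hwpos τ hτ)]
      exact mul_le_of_le_one_left (abs_nonneg _) (hw1 τ hτ)
    simpa using hE₁.neg.sub hwg
  have hw_lim : Tendsto w atBot (𝓝 1) := by
    refine tendsto_one_of_hasDerivAt_mul_one_sub_sq hA (C := 2 * A + 1) (by positivity)
      (fun τ hτ => (hwpos τ hτ).le) hw1 hρpos hlim hw' hρ' hwe_lim ?_
    filter_upwards [hg_lim.eventually (gt_mem_nhds one_pos), eventually_le_atBot T] with τ h1 hτ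
    nlinarith [hw1 τ hτ]
  have hwinv : Tendsto (fun τ => (w τ)⁻¹) atBot (𝓝 1) := by
    simpa using hw_lim.inv₀ one_ne_zero
  constructor
  · have hinv' : ∀ τ ≤ T, HasDerivAt (fun s => (-α₁ s)⁻¹)
        (-2 * A - A * ((w τ)⁻¹ ^ 2 - 1) + e₁ τ * (w τ)⁻¹ ^ 2) τ := fun τ hτ => by
      refine ((hode₁ τ hτ).neg.inv (neg_pos.2 (hneg τ hτ)).ne').congr_deriv ?_
      have h0 := (hρpos τ hτ).ne'
      have h1 := (hwpos τ hτ).ne'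
      rw [hE₁e τ hτ, Pi.neg_apply, hα₁ τ hτ, hα₂ τ hτ, hα₃ τ hτ]
      field_simp
      linear_combination (-A) * hunit τ hτ
    have hlimit : Tendsto (fun τ => -2 * A - A * ((w τ)⁻¹ ^ 2 - 1) + e₁ τ * (w τ)⁻¹ ^ 2)
        atBot (𝓝 (-2 * A)) := by
      simpa using (((((hwinv.pow 2).sub_const 1).const_mul A).const_sub (-2 * A)).add
        (hE₁.mul (hwinv.pow 2)))
    have hdiv := (tendsto_div_self_atBot_of_hasDerivAt hinv' hlimit).inv₀ (by linarith)
    have hprod := (hdiv.const_mul (-A)).mul (hwinv.const_add 1)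
    have hval : -A * (-2 * A)⁻¹ * (1 + 1) = 1 := by field_simp; norm_num
    rw [hval] at hprod
    refine hprod.congr' ?_
    filter_upwards [eventually_le_atBot T, eventually_lt_atBot 0] with τ hτ hτ0
    have h0 := (hρpos τ hτ).ne'
    have h1 := (hwpos τ hτ).ne'
    change _ = A * |τ| * (|α₁ τ| + ρ τ)
    rw [abs_of_neg hτ0, abs_of_neg (hneg τ hτ), hα₁ τ hτ]
    field_simp
  · have hbase : Tendsto (fun τ => 2 * Real.sqrt ((w τ)⁻¹ ^ 2 - 1)) atBot (𝓝 0) := by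
      simpa using (((hwinv.pow 2).sub_const 1).sqrt).const_mul 2
    refine squeeze_zero' (Eventually.of_forall fun τ => by positivity) ?_ hbase
    filter_upwards [eventually_le_atBot T] with τ hτ
    have h0 := hρpos τ hτ
    have h1 := hwpos τ hτ
    have hratio : (|α₂ τ| + |α₃ τ|) / |α₁ τ| = |u τ / w τ| + |v τ / w τ| := by
      rw [hα₁ τ hτ, hα₂ τ hτ, hα₃ τ hτ, abs_neg, abs_mul, abs_mul, abs_mul,
        abs_div (u τ) (w τ), abs_div (v τ) (w τ),
        abs_of_pos h0, abs_of_pos h1, ← add_div, ← mul_add, mul_div_mul_left _ _ h0.ne']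
    have hsq : (w τ)⁻¹ ^ 2 - 1 = (u τ / w τ) ^ 2 + (v τ / w τ) ^ 2 := by
      field_simp
      linarith [hunit τ hτ]
    rw [hratio, hsq]
    have h2 := Real.abs_le_sqrt (le_add_of_nonneg_right (a := (u τ / w τ) ^ 2)
      (sq_nonneg (v τ / w τ)))
    have h3 := Real.abs_le_sqrt (le_add_of_nonneg_left (a := (v τ / w τ) ^ 2)
      (sq_nonneg (u τ / w τ)))
    linarith
end

section
/- Discrete parabola iteration: let r : [1, ∞) → ℝ be a continuous function with r(z) > 0 for all z, and let ε : [1, ∞) → ℝ be a bounded function with ε(z) → 0 as z → ∞. Suppose that for every z ≥ 1 one has |r(z + r(z)) − r(z) − 1| ≤ ε(z). Then r(h)/√(2h) → 1 as h → ∞; that is, r(h) = √(2h) + o(√h). -/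
open Filter

/-- A continuous function that does not increase along the orbits of a continuous map `T` with
`z < T z` is bounded above on `[a, ∞)`, by its maximum over the fundamental domain `[a, T a]`. -/
theorem exists_forall_le_of_comp_le {f T : ℝ → ℝ} {a : ℝ}
    (hf : ContinuousOn f (Set.Ici a)) (hT : ContinuousOn T (Set.Ici a))
    (hlt : ∀ z ≥ a, z < T z) (hle : ∀ z ≥ a, f (T z) ≤ f z) :
    ∃ C, ∀ h ≥ a, f h ≤ C := by
  obtain ⟨C, hC⟩ := isCompact_Icc.bddAbove_image
    (hf.mono (Set.Icc_subset_Ici_self : Set.Icc a (T a) ⊆ Set.Ici a))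
  refine ⟨C, fun h hh => ?_⟩
  by_contra! hCh
  have hclosed : IsClosed (Set.Icc a h ∩ f ⁻¹' Set.Ici (f h)) :=
    (hf.mono Set.Icc_subset_Ici_self).preimage_isClosed_of_isClosed isClosed_Icc isClosed_Ici
  have hcompact : IsCompact (Set.Icc a h ∩ f ⁻¹' Set.Ici (f h)) :=
    isCompact_Icc.of_isClosed_subset hclosed Set.inter_subset_left
  obtain ⟨x, ⟨⟨hax, hxh⟩, hfx⟩, hmin⟩ :=
    hcompact.exists_isLeast ⟨h, ⟨hh, le_rfl⟩, le_refl (f h)⟩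
  have hfx' : f h ≤ f x := hfx
  have hTx : T a ≤ x := by
    by_contra! hlt'
    have : f x ≤ C := hC ⟨x, ⟨hax, hlt'.le⟩, rfl⟩
    linarith
  obtain ⟨w, ⟨haw, -⟩, hw⟩ := intermediate_value_Icc hax
    (hT.mono Set.Icc_subset_Ici_self) ⟨hTx, (hlt x hax).le⟩
  have hwx : w < x := hw ▸ hlt w haw
  have hfw : f x ≤ f w := hw ▸ hle w haw
  exact hwx.not_ge (hmin ⟨⟨haw, hwx.le.trans hxh⟩, hfx'.trans hfw⟩)

/-- Discrete parabola iteration: if `r` is continuous and positive on `[1, ∞)` and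
moving up by one neck radius increases the radius by `1` up to an error `ε(z)`
which is bounded and tends to `0` as `z → ∞`, then `r(h) = √(2h) + o(√h)`, i.e.
`r(h)/√(2h) → 1` as `h → ∞`. -/
theorem discrete_parabola_iteration
    (r ε : ℝ → ℝ)
    (hr_cont : ContinuousOn r (Set.Ici 1))
    (hr_pos : ∀ z ≥ (1 : ℝ), 0 < r z)
    (hε_bdd : ∃ M : ℝ, ∀ z ≥ (1 : ℝ), |ε z| ≤ M)
    (hε_lim : Tendsto ε atTop (nhds 0))
    (hrec : ∀ z ≥ (1 : ℝ), |r (z + r z) - r z - 1| ≤ ε z) :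
    Tendsto (fun h => r h / Real.sqrt (2 * h)) atTop (nhds 1) := by
  rw [Metric.tendsto_nhds]
  intro η hη
  obtain ⟨δ, hδ, hδη, hδ2⟩ : ∃ δ : ℝ, 0 < δ ∧ 2 * δ < η ∧ δ ≤ 1 / 2 :=
    ⟨min (η / 4) (1 / 2), by positivity, by linarith [min_le_left (η / 4) (1 / 2)],
      min_le_right _ _⟩
  obtain ⟨a, ha⟩ := eventually_atTop.1
    ((hε_lim.eventually (gt_mem_nhds hδ)).and (eventually_ge_atTop 1))
  have ha1 : 1 ≤ a := (ha a le_rfl).2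
  have hr : ContinuousOn r (Set.Ici a) := hr_cont.mono (Set.Ici_subset_Ici.2 ha1)
  have hT : ContinuousOn (fun z => z + r z) (Set.Ici a) := continuousOn_id.add hr
  have hlt : ∀ z ≥ a, z < z + r z := fun z hz => by linarith [hr_pos z (ha1.trans hz)]
  have hstep : ∀ z ≥ a, ∃ e, |e| ≤ δ ∧ r (z + r z) = r z + 1 + e := fun z hz =>
    ⟨r (z + r z) - r z - 1, (hrec z (ha1.trans hz)).trans (ha z hz).1.le, by ring⟩
  -- The term `-8 r` absorbs the square of the increment of `r`.
  obtain ⟨C, hC⟩ := exists_forall_le_of_comp_le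
    (f := fun z => r z ^ 2 - 8 * r z - 2 * (1 + δ) * z) (by fun_prop) hT hlt (fun z hz => by
      obtain ⟨e, he, hre⟩ := hstep z hz
      have hpos := hr_pos z (ha1.trans hz)
      obtain ⟨he1, he2⟩ := abs_le.1 he
      simp only [hre]
      nlinarith [mul_nonneg hpos.le (sub_nonneg.2 he2),
        mul_nonneg (by linarith : 0 ≤ 1 + e) (by linarith : 0 ≤ 7 - e)])
  obtain ⟨D, hD⟩ := exists_forall_le_of_comp_le
    (f := fun z => 2 * (1 - δ) * z - r z ^ 2) (by fun_prop) hT hlt (fun z hz => by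
      obtain ⟨e, he, hre⟩ := hstep z hz
      have hpos := hr_pos z (ha1.trans hz)
      obtain ⟨he1, he2⟩ := abs_le.1 he
      simp only [hre]
      nlinarith [mul_nonneg hpos.le (by linarith : 0 ≤ e + δ), sq_nonneg (1 + e)])
  have hsqrt : Tendsto (fun h : ℝ => Real.sqrt (2 * h)) atTop atTop :=
    Real.tendsto_sqrt_atTop.comp (tendsto_id.const_mul_atTop two_pos)
  filter_upwards [eventually_ge_atTop a, hsqrt.eventually_ge_atTop 1,
    hsqrt.eventually_ge_atTop ((16 + |C| + |D|) / δ)] with h hh hs1 hs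
  have hpos := hr_pos h (ha1.trans hh)
  have hsq : Real.sqrt (2 * h) ^ 2 = 2 * h := Real.sq_sqrt (by linarith)
  have hCh := hC h hh
  have hDh := hD h hh
  generalize Real.sqrt (2 * h) = s at *
  have hs0 : 0 < s := by linarith
  have hδs : 16 + |C| + |D| ≤ δ * s := by rwa [div_le_iff₀' hδ] at hs
  have hδs2 : (16 + |C| + |D|) * s ≤ δ * s ^ 2 := by nlinarith
  have hCs : |C| ≤ |C| * s := le_mul_of_one_le_right (abs_nonneg C) hs1
  have hDs : |D| ≤ |D| * s := le_mul_of_one_le_right (abs_nonneg D) hs1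
  have hCnn := mul_nonneg (abs_nonneg C) hs0.le
  have hDnn := mul_nonneg (abs_nonneg D) hs0.le
  have hupper : r h ≤ (1 + 2 * δ) * s := by
    by_contra! hcon
    have hs16 : 16 ≤ s := by nlinarith [abs_nonneg C, abs_nonneg D]
    have h1 : 0 ≤ (1 + 2 * δ) * s - 4 := by nlinarith
    have h2 : ((1 + 2 * δ) * s - 4) ^ 2 ≤ (r h - 4) ^ 2 := by gcongr
    nlinarith [le_abs_self C, mul_nonneg (sub_nonneg.2 hδ2) hs0.le, sq_nonneg (δ * s)]
  have hlower : (1 - 2 * δ) * s ≤ r h := by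
    refine le_of_sq_le_sq ?_ hpos.le
    nlinarith [le_abs_self D, mul_nonneg (mul_nonneg hδ.le (sub_nonneg.2 hδ2)) (sq_nonneg s)]
  rw [Real.dist_eq, abs_lt]
  have hu : r h / s ≤ 1 + 2 * δ := (div_le_iff₀ hs0).2 hupper
  have hl : 1 - 2 * δ ≤ r h / s := (le_div_iff₀ hs0).2 hlower
  constructor <;> linarith
end
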